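/- arXiv:2305.07456 — 3 statements merged into one kernel-verified Lean document; each statement's English description precedes it below -/
import Mathlib

section
/- Let X be a graph or a geodesic metric space, let A, Z ⊆ X, let K > 0, and fix a shortest path γ joining A to Z, parametrized by arc length. Let B < C be maximal bridges with C⁰ > B¹ (so the interval of C begins after the interval of B ends). If there are points x ∈ B and y ∈ C with d(x,y) ≤ K/4, then d(B¹, C⁰) < 3K/4. -/
/-!
Write `F` for the set of points at distance at least `K/8` from `γ`. A path inside `F` whose two
ends lie at distance exactly `K/8` from `γ t0` and `γ t1` is the spine of a bridge whose interval
contains `[t0, t1]`: if the path happens to meet `A` or `Z`, the interval only gets longer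
(`exists_bridge`).

Join `x` to `y` by a geodesic `P`. If `P` stays at distance more than `K/8` from `γ`, then `x` and
`y` lie on the spines, and the two spines together with `P` form the spine of a bridge whose
interval contains `[B⁰, C¹]`, contradicting the maximality of `B` (`Bridge.Maximal.not_joinedIn`).
Otherwise some point of `P` is within `K/8` of a `γ t` with `t ≤ B¹`: if `x` is on a leg, `x` itself
is such a point; if `x` is on the spine, follow `P` from `x` to the first point at distance `K/8`
from `γ` (`exists_first_hit`). A foot `γ t` of that point with `t > B¹` would make the spine of `B`,
continued along `P`, the spine of a bridge with a larger interval (`Bridge.Maximal.le_t1`).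
Symmetrically, some point of `P` is within `K/8` of a `γ t'` with `t' ≥ C⁰`. Since `P` has length at
most `K/4`, the triangle inequality gives `C⁰ - B¹ ≤ t' - t ≤ K/8 + K/4 + K/8 < 3K/4`.
-/


/-- A metric space is geodesic if every two points are joined by a geodesic. -/
def IsGeodesicSpace (X : Type*) [MetricSpace X] : Prop :=
  ∀ x y : X, ∃ f : ℝ → X, f 0 = x ∧ f (dist x y) = y ∧
    ∀ s ∈ Set.Icc 0 (dist x y), ∀ t ∈ Set.Icc 0 (dist x y), dist (f s) (f t) = |s - t|
/-- A metric space is a length space if any two points are joined by paths of length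
arbitrarily close to their distance. -/
def IsLengthSpace (X : Type*) [MetricSpace X] : Prop :=
  ∀ x y : X, ∀ ε : ℝ, 0 < ε → ∃ p : Path x y,
    eVariationOn (fun t => p t) Set.univ ≤ ENNReal.ofReal (dist x y + ε)
/-- A bridge with respect to a shortest `A`–`Z` path `γ : [0,ℓ] → X` and a constant `K`:
a union of three successive paths `leg1 ∪ spine ∪ leg2`, where every point of the spine is
at distance at least `K/8` from `γ`; if the spine meets `A` then `leg1` is degenerate (a
single endpoint of the spine) and the interval of the bridge starts at `γ 0` (parameter
`t0 = 0`), and otherwise `leg1` is a geodesic path of length `K/8` joining the endpoint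
`γ t0` on `γ` to the spine; symmetrically for `leg2` and `Z`.  The parameters `t0 ≤ t1`
record the endpoints `B⁰, B¹` of the bridge on `γ`, and `[t0, t1]` is its interval. -/
structure Bridge {X : Type*} [MetricSpace X] (A Z : Set X) (K ℓ : ℝ) (γ : ℝ → X) where
  p : X
  q : X
  spine : Path p q
  a1 : X
  a2 : X
  leg1 : Path a1 p
  leg2 : Path q a2
  t0 : ℝ
  t1 : ℝ
  ht0 : t0 ∈ Set.Icc 0 ℓ
  ht1 : t1 ∈ Set.Icc 0 ℓ
  hle : t0 ≤ t1
  spine_far : ∀ s : unitInterval, ∀ t ∈ Set.Icc 0 ℓ, K / 8 ≤ dist (spine s) (γ t)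
  leg1_spec :
    ((∃ s : unitInterval, spine s ∈ A) ∧ a1 = p ∧ (∀ s, leg1 s = p) ∧ t0 = 0) ∨
    ((∀ s : unitInterval, spine s ∉ A) ∧ a1 = γ t0 ∧
      ∀ s t : unitInterval, dist (leg1 s) (leg1 t) = K / 8 * |(s : ℝ) - (t : ℝ)|)
  leg2_spec :
    ((∃ s : unitInterval, spine s ∈ Z) ∧ a2 = q ∧ (∀ s, leg2 s = q) ∧ t1 = ℓ) ∨
    ((∀ s : unitInterval, spine s ∉ Z) ∧ a2 = γ t1 ∧
      ∀ s t : unitInterval, dist (leg2 s) (leg2 t) = K / 8 * |(s : ℝ) - (t : ℝ)|)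

/-- A bridge `B` `d`-surrounds the point `γ t` if its interval `[B⁰, B¹]` contains the
points `t - d` and `t + d` (truncated at `0` and `ℓ` respectively). -/
def Bridge.Surrounds {X : Type*} [MetricSpace X] {A Z : Set X} {K ℓ : ℝ} {γ : ℝ → X}
    (B : Bridge A Z K ℓ γ) (d t : ℝ) : Prop :=
  B.t0 ≤ max (t - d) 0 ∧ min (t + d) ℓ ≤ B.t1

/-- A bridge is maximal if its interval is not properly contained in the interval of
another bridge. -/
def Bridge.Maximal {X : Type*} [MetricSpace X] {A Z : Set X} {K ℓ : ℝ} {γ : ℝ → X}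
    (B : Bridge A Z K ℓ γ) : Prop :=
  ∀ C : Bridge A Z K ℓ γ, C.t0 ≤ B.t0 → B.t1 ≤ C.t1 → (C.t0 = B.t0 ∧ C.t1 = B.t1)

/-- The set of points of a bridge: the union of its spine and its two legs. -/
def Bridge.carrier {X : Type*} [MetricSpace X] {A Z : Set X} {K ℓ : ℝ} {γ : ℝ → X}
    (B : Bridge A Z K ℓ γ) : Set X :=
  Set.range (fun s => B.spine s) ∪ Set.range (fun s => B.leg1 s) ∪
    Set.range (fun s => B.leg2 s)

/-! ### Paths away from `γ` -/

/-- The points at distance at least `r` from the arc `γ [0,ℓ]`; the spines of bridges live in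
`farSet (K / 8) ℓ γ`. -/
def farSet {X : Type*} [MetricSpace X] (r ℓ : ℝ) (γ : ℝ → X) : Set X :=
  {z | ∀ t ∈ Set.Icc 0 ℓ, r ≤ dist z (γ t)}

section

variable {X : Type*} [MetricSpace X]

/-- In a geodesic space any two points are joined by a path of constant speed. -/
theorem exists_geodesic_path (hX : IsGeodesicSpace X) (x y : X) :
    ∃ P : Path x y, ∀ s t : unitInterval,
      dist (P s) (P t) = dist x y * |(s : ℝ) - (t : ℝ)| := by
  obtain ⟨f, h0, h1, hf⟩ := hX x y
  have mem (s : unitInterval) : dist x y * (s : ℝ) ∈ Set.Icc 0 (dist x y) :=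
    ⟨mul_nonneg dist_nonneg s.2.1, mul_le_of_le_one_right dist_nonneg s.2.2⟩
  have key (s t : unitInterval) :
      dist (f (dist x y * s)) (f (dist x y * t)) = dist x y * |(s : ℝ) - (t : ℝ)| := by
    rw [hf _ (mem s) _ (mem t), ← mul_sub, abs_mul, abs_of_nonneg dist_nonneg]
  refine ⟨⟨⟨fun s => f (dist x y * s), ?_⟩, by simpa using h0, by simpa using h1⟩, key⟩
  refine (LipschitzWith.of_dist_le_mul (K := ⟨dist x y, dist_nonneg⟩) fun s t => ?_).continuous
  exact (key s t).le

/-- A path in `F` can be prolonged inside `F` without giving up any of its points. Keeping all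
points matters because a bridge remembers whether its spine meets `A` or `Z`. -/
theorem Path.exists_extend {F : Set X} {p q r : X} (σ : Path p q)
    (hσ : Set.range σ ⊆ F) (h : JoinedIn F q r) :
    ∃ τ : Path p r, Set.range τ ⊆ F ∧ Set.range σ ⊆ Set.range τ := by
  obtain ⟨ρ, hρ⟩ := h
  refine ⟨σ.trans ρ, ?_, ?_⟩
  · rw [Path.trans_range]
    exact Set.union_subset hσ (Set.range_subset_iff.2 hρ)
  · rw [Path.trans_range]
    exact Set.subset_union_left

theorem Path.joinedIn_of_range {F : Set X} {p q : X} (σ : Path p q)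
    (hσ : Set.range σ ⊆ F) (s t : unitInterval) : JoinedIn F (σ s) (σ t) := by
  have h := isPathConnected_range σ.continuous_extend
  rw [Path.extend_range] at h
  exact (h.joinedIn _ ⟨s, rfl⟩ _ ⟨t, rfl⟩).mono hσ

/-- A path that starts at distance at least `r` from `γ` and gets within `r` of `γ` has a first
point at distance exactly `r` from `γ`, and it stays far from `γ` up to that point. -/
theorem exists_first_hit {ℓ r : ℝ} {γ : ℝ → X} (hγ : ContinuousOn γ (Set.Icc 0 ℓ))
    {x y : X} (P : Path x y) (hx : x ∈ farSet r ℓ γ)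
    (hit : ∃ s : unitInterval, ∃ t ∈ Set.Icc 0 ℓ, dist (P s) (γ t) ≤ r) :
    ∃ s : unitInterval, JoinedIn (farSet r ℓ γ) x (P s) ∧
      ∃ t ∈ Set.Icc 0 ℓ, dist (γ t) (P s) = r := by
  obtain ⟨s₁, t₁, ht₁, h₁⟩ := hit
  set S := γ '' Set.Icc 0 ℓ with hS
  have hSc : IsCompact S := isCompact_Icc.image_of_continuousOn hγ
  have hSn : S.Nonempty := ⟨γ t₁, t₁, ht₁, rfl⟩
  have far_iff (z : X) : z ∈ farSet r ℓ γ ↔ r ≤ Metric.infDist z S := by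
    rw [Metric.le_infDist hSn]
    exact ⟨fun h _ ⟨t, ht, e⟩ => e ▸ h t ht, fun h t ht => h ⟨t, ht, rfl⟩⟩
  set g : ℝ → ℝ := fun s => Metric.infDist (P.extend s) S with hg
  have hgc : Continuous g := (Metric.continuous_infDist_pt S).comp P.continuous_extend
  have hg0 : r ≤ g 0 := by simpa [hg] using (far_iff x).1 hx
  have hT : IsCompact (Set.Icc (0 : ℝ) 1 ∩ {s | g s ≤ r}) :=
    isCompact_Icc.inter_right (isClosed_le hgc continuous_const)
  have hTn : (Set.Icc (0 : ℝ) 1 ∩ {s | g s ≤ r}).Nonempty := ⟨s₁, s₁.2, by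
    change g s₁ ≤ r
    simp only [hg, Path.extend_apply _ s₁.2]
    exact (Metric.infDist_le_dist_of_mem (Set.mem_image_of_mem γ ht₁)).trans h₁⟩
  obtain ⟨s₀, ⟨hs₀, hle⟩, hmin⟩ := hT.exists_isLeast hTn
  have hle : g s₀ ≤ r := hle
  -- By the intermediate value theorem `g` takes the value `r` on `[0, s₀]`, so it does so at `s₀`.
  have heq : g s₀ = r := by
    obtain ⟨u, hu, hur⟩ := intermediate_value_Icc' hs₀.1 hgc.continuousOn ⟨hle, hg0⟩
    have : s₀ ≤ u := hmin ⟨⟨hu.1, hu.2.trans hs₀.2⟩, hur.le⟩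
    rwa [le_antisymm this hu.2]
  have hfar : P.extend '' Set.Icc 0 s₀ ⊆ farSet r ℓ γ := by
    rintro _ ⟨u, hu, rfl⟩
    rw [far_iff]
    by_contra! hlt
    have : s₀ ≤ u := hmin ⟨⟨hu.1, hu.2.trans hs₀.2⟩, hlt.le⟩
    rw [le_antisymm hu.2 this] at hlt
    exact hlt.ne heq
  have hpc : IsPathConnected (P.extend '' Set.Icc 0 s₀) :=
    ((convex_Icc (0 : ℝ) s₀).isPathConnected ⟨0, le_rfl, hs₀.1⟩).image P.continuous_extend
  refine ⟨⟨s₀, hs₀⟩, ?_, ?_⟩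
  · have := (hpc.joinedIn _ ⟨0, ⟨le_rfl, hs₀.1⟩, rfl⟩ _ ⟨s₀, ⟨hs₀.1, le_rfl⟩, rfl⟩).mono hfar
    simpa [Path.extend_apply _ hs₀] using this
  · obtain ⟨_, ⟨t, ht, rfl⟩, h⟩ := hSc.exists_infDist_eq_dist hSn (P ⟨s₀, hs₀⟩)
    refine ⟨t, ht, ?_⟩
    rw [dist_comm, ← h, ← heq]
    simp only [hg, Path.extend_apply _ hs₀]

/-! ### Constructing bridges and extending maximal ones -/

variable {A Z : Set X} {K ℓ : ℝ} {γ : ℝ → X}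

/-- A path in `farSet` that can be attached to `γ t0` and `γ t1` (or that meets `A`, respectively
`Z`) is the spine of a bridge whose interval contains `[t0, t1]`. -/
theorem exists_bridge (hX : IsGeodesicSpace X) {p q : X} (σ : Path p q)
    (hσ : Set.range σ ⊆ farSet (K / 8) ℓ γ) {t0 t1 : ℝ} (ht0 : t0 ∈ Set.Icc 0 ℓ)
    (ht1 : t1 ∈ Set.Icc 0 ℓ) (hle : t0 ≤ t1)
    (h0 : (∃ s, σ s ∈ A) ∨ dist (γ t0) p = K / 8)
    (h1 : (∃ s, σ s ∈ Z) ∨ dist (γ t1) q = K / 8) :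
    ∃ D : Bridge A Z K ℓ γ, D.t0 ≤ t0 ∧ t1 ≤ D.t1 := by
  have hℓ : 0 ≤ ℓ := ht0.1.trans ht0.2
  obtain ⟨a1, leg1, u0, hu0, hu0t, spec1⟩ : ∃ (a1 : X) (leg1 : Path a1 p) (u0 : ℝ),
      u0 ∈ Set.Icc 0 ℓ ∧ u0 ≤ t0 ∧
      (((∃ s : unitInterval, σ s ∈ A) ∧ a1 = p ∧ (∀ s, leg1 s = p) ∧ u0 = 0) ∨
      ((∀ s : unitInterval, σ s ∉ A) ∧ a1 = γ u0 ∧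
        ∀ s t : unitInterval, dist (leg1 s) (leg1 t) = K / 8 * |(s : ℝ) - (t : ℝ)|)) := by
    by_cases hA : ∃ s, σ s ∈ A
    · exact ⟨p, Path.refl p, 0, ⟨le_rfl, hℓ⟩, ht0.1, Or.inl ⟨hA, rfl, fun _ => rfl, rfl⟩⟩
    · obtain ⟨P, hP⟩ := exists_geodesic_path hX (γ t0) p
      rw [h0.resolve_left hA] at hP
      exact ⟨γ t0, P, t0, ht0, le_rfl, Or.inr ⟨not_exists.1 hA, rfl, hP⟩⟩
  obtain ⟨a2, leg2, u1, hu1, hu1t, spec2⟩ : ∃ (a2 : X) (leg2 : Path q a2) (u1 : ℝ),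
      u1 ∈ Set.Icc 0 ℓ ∧ t1 ≤ u1 ∧
      (((∃ s : unitInterval, σ s ∈ Z) ∧ a2 = q ∧ (∀ s, leg2 s = q) ∧ u1 = ℓ) ∨
      ((∀ s : unitInterval, σ s ∉ Z) ∧ a2 = γ u1 ∧
        ∀ s t : unitInterval, dist (leg2 s) (leg2 t) = K / 8 * |(s : ℝ) - (t : ℝ)|)) := by
    by_cases hZ : ∃ s, σ s ∈ Z
    · exact ⟨q, Path.refl q, ℓ, ⟨hℓ, le_rfl⟩, ht1.2, Or.inl ⟨hZ, rfl, fun _ => rfl, rfl⟩⟩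
    · obtain ⟨P, hP⟩ := exists_geodesic_path hX q (γ t1)
      rw [dist_comm q, h1.resolve_left hZ] at hP
      exact ⟨γ t1, P, t1, ht1, le_rfl, Or.inr ⟨not_exists.1 hZ, rfl, hP⟩⟩
  exact ⟨⟨p, q, σ, a1, a2, leg1, leg2, u0, u1, hu0, hu1, hu0t.trans (hle.trans hu1t),
    fun s => hσ ⟨s, rfl⟩, spec1, spec2⟩, hu0t, hu1t⟩

namespace Bridge

theorem range_spine_subset (B : Bridge A Z K ℓ γ) :
    Set.range B.spine ⊆ farSet (K / 8) ℓ γ :=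
  Set.range_subset_iff.2 B.spine_far

theorem meets_or_dist_left (B : Bridge A Z K ℓ γ) :
    (∃ s, B.spine s ∈ A) ∨ dist (γ B.t0) B.p = K / 8 := by
  rcases B.leg1_spec with h | ⟨-, ha, h⟩
  · exact Or.inl h.1
  · right
    simpa [← ha] using h 0 1

theorem meets_or_dist_right (B : Bridge A Z K ℓ γ) :
    (∃ s, B.spine s ∈ Z) ∨ dist (γ B.t1) B.q = K / 8 := by
  rcases B.leg2_spec with h | ⟨-, ha, h⟩
  · exact Or.inl h.1
  · right
    simpa [← ha, dist_comm] using h 0 1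

/-- A point of a bridge lies on its spine or, being on a nondegenerate leg, within `K/8` of an
endpoint of its interval. -/
theorem mem_spine_or_near (hK : 0 < K) (B : Bridge A Z K ℓ γ) {x : X} (hx : x ∈ B.carrier) :
    (∃ s, B.spine s = x) ∨ dist (γ B.t0) x ≤ K / 8 ∨ dist (γ B.t1) x ≤ K / 8 := by
  rcases hx with (⟨s, rfl⟩ | ⟨s, rfl⟩) | ⟨s, rfl⟩
  · exact Or.inl ⟨s, rfl⟩
  · rcases B.leg1_spec with ⟨-, -, h, -⟩ | ⟨-, ha, h⟩
    · exact Or.inl ⟨0, by simp [h]⟩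
    · right; left
      have := h 0 s
      rw [Path.source] at this
      rw [← ha, this]
      have : |((0 : unitInterval) : ℝ) - s| ≤ 1 := by
        have := s.2.1; have := s.2.2
        rw [abs_le]; constructor <;> simp <;> linarith
      nlinarith
  · rcases B.leg2_spec with ⟨-, -, h, -⟩ | ⟨-, ha, h⟩
    · exact Or.inl ⟨1, by simp [h]⟩
    · right; right
      have := h 1 s
      rw [Path.target] at this
      rw [← ha, this]
      have : |((1 : unitInterval) : ℝ) - s| ≤ 1 := by
        have := s.2.1; have := s.2.2
        rw [abs_le]; constructor <;> simp <;> linarith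
      nlinarith

/-- The spine of a maximal bridge cannot be continued so as to attach to `γ` beyond the right end
of the interval. -/
theorem Maximal.le_t1 (hX : IsGeodesicSpace X) {B : Bridge A Z K ℓ γ} (hB : B.Maximal)
    {s : unitInterval} {w : X} (hw : JoinedIn (farSet (K / 8) ℓ γ) (B.spine s) w)
    {t : ℝ} (ht : t ∈ Set.Icc 0 ℓ) (hd : dist (γ t) w = K / 8) : t ≤ B.t1 := by
  by_contra! hlt
  have hqs := B.spine.joinedIn_of_range B.range_spine_subset 1 s
  rw [Path.target] at hqs
  obtain ⟨τ, hτ, hsub⟩ := B.spine.exists_extend B.range_spine_subset (hqs.trans hw)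
  obtain ⟨D, hD0, hD1⟩ := exists_bridge (A := A) (Z := Z) hX τ hτ B.ht0 ht (B.hle.trans hlt.le)
    (B.meets_or_dist_left.imp_left fun ⟨u, hu⟩ => by
      obtain ⟨v, hv⟩ := hsub ⟨u, rfl⟩
      exact ⟨v, hv ▸ hu⟩) (Or.inr hd)
  have := (hB D hD0 (hlt.le.trans hD1)).2
  linarith

/-- The spine of a maximal bridge cannot be continued so as to attach to `γ` before the left end
of the interval. -/
theorem Maximal.t0_le (hX : IsGeodesicSpace X) {C : Bridge A Z K ℓ γ} (hC : C.Maximal)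
    {s : unitInterval} {w : X} (hw : JoinedIn (farSet (K / 8) ℓ γ) (C.spine s) w)
    {t : ℝ} (ht : t ∈ Set.Icc 0 ℓ) (hd : dist (γ t) w = K / 8) : C.t0 ≤ t := by
  by_contra! hlt
  have hps := C.spine.joinedIn_of_range C.range_spine_subset 0 s
  rw [Path.source] at hps
  obtain ⟨τ, hτ, hsub⟩ := C.spine.symm.exists_extend
    (by rw [Path.symm_range]; exact C.range_spine_subset) (hps.trans hw)
  rw [Path.symm_range, ← Path.symm_range τ] at hsub
  obtain ⟨D, hD0, hD1⟩ := exists_bridge (A := A) (Z := Z) hX τ.symm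
    (by rwa [Path.symm_range]) ht C.ht1 (hlt.le.trans C.hle)
    (Or.inr hd)
    (C.meets_or_dist_right.imp_left fun ⟨u, hu⟩ => by
      obtain ⟨v, hv⟩ := hsub ⟨u, rfl⟩
      exact ⟨v, hv ▸ hu⟩)
  have := (hC D (hD0.trans hlt.le) hD1).1
  linarith

/-- The spine of a maximal bridge cannot be joined, away from `γ`, to the spine of a bridge lying
further to the right. -/
theorem Maximal.not_joinedIn (hX : IsGeodesicSpace X) {B C : Bridge A Z K ℓ γ} (hB : B.Maximal)
    (hsep : B.t1 < C.t0) (s u : unitInterval) :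
    ¬ JoinedIn (farSet (K / 8) ℓ γ) (B.spine s) (C.spine u) := by
  intro hj
  have hqs := B.spine.joinedIn_of_range B.range_spine_subset 1 s
  have hup := C.spine.joinedIn_of_range C.range_spine_subset u 0
  rw [Path.target] at hqs
  rw [Path.source] at hup
  obtain ⟨τ, hτ, hsub⟩ := B.spine.exists_extend B.range_spine_subset ((hqs.trans hj).trans hup)
  have hr : Set.range (τ.trans C.spine) = Set.range τ ∪ Set.range C.spine := Path.trans_range _ _
  have hlt : B.t1 < C.t1 := hsep.trans_le C.hle
  obtain ⟨D, hD0, hD1⟩ := exists_bridge (A := A) (Z := Z) hX (τ.trans C.spine)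
    (by rw [hr]; exact Set.union_subset hτ C.range_spine_subset) B.ht0 C.ht1
    (B.hle.trans hlt.le)
    (B.meets_or_dist_left.imp_left fun ⟨v, hv⟩ => by
      obtain ⟨v', hv'⟩ : B.spine v ∈ Set.range (τ.trans C.spine) := hr ▸ Or.inl (hsub ⟨v, rfl⟩)
      exact ⟨v', hv' ▸ hv⟩)
    (C.meets_or_dist_right.imp_left fun ⟨v, hv⟩ => by
      obtain ⟨v', hv'⟩ : C.spine v ∈ Set.range (τ.trans C.spine) := hr ▸ Or.inr ⟨v, rfl⟩
      exact ⟨v', hv' ▸ hv⟩)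
  have := (hB D hD0 (hlt.le.trans hD1)).2
  linarith

end Bridge

end

/-! ### Maximal bridges with nearby points -/

/-- Let `γ : [0,ℓ] → X` be a shortest path joining `A` to `Z` in a geodesic metric space
`X`, parametrized by arc length, and let `B < C` be maximal bridges with `C⁰ > B¹`.  If
there are points `x ∈ B` and `y ∈ C` with `dist x y ≤ K/4`, then
`dist (γ B¹) (γ C⁰) < 3K/4`. -/
theorem maximal_bridges_close_points
    {X : Type} [MetricSpace X] (hX : IsGeodesicSpace X)
    (A Z : Set X) (K : ℝ) (hK : 0 < K) (ℓ : ℝ) (hℓ : 0 ≤ ℓ) (γ : ℝ → X)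
    (hγ0 : γ 0 ∈ A) (hγℓ : γ ℓ ∈ Z)
    (hgeo : ∀ s ∈ Set.Icc 0 ℓ, ∀ t ∈ Set.Icc 0 ℓ, dist (γ s) (γ t) = |s - t|)
    (hshort : ∀ a ∈ A, ∀ z ∈ Z, ∀ p : Path a z,
      ENNReal.ofReal ℓ ≤ eVariationOn (fun t => p t) Set.univ)
    (B C : Bridge A Z K ℓ γ) (hBmax : B.Maximal) (hCmax : C.Maximal)
    (hlt : B.t0 < C.t0) (hsep : B.t1 < C.t0)
    (x y : X) (hx : x ∈ B.carrier) (hy : y ∈ C.carrier)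
    (hxy : dist x y ≤ K / 4) :
    dist (γ B.t1) (γ C.t0) < 3 * K / 4 := by
  have hγ : ContinuousOn γ (Set.Icc 0 ℓ) := by
    refine (LipschitzOnWith.of_dist_le_mul (K := 1) fun s hs t ht => ?_).continuousOn
    rw [hgeo s hs t ht, Real.dist_eq]
    simp
  obtain ⟨P, hP⟩ := exists_geodesic_path hX x y
  have hPd (s u : unitInterval) : dist (P s) (P u) ≤ K / 4 := by
    rw [hP]
    have : |(s : ℝ) - u| ≤ 1 := by
      have := s.2.1; have := s.2.2; have := u.2.1; have := u.2.2
      rw [abs_le]; constructor <;> linarith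
    exact (mul_le_of_le_one_right dist_nonneg this).trans hxy
  have hxc := B.mem_spine_or_near hK hx
  have hyc := C.mem_spine_or_near hK hy
  have hit : ∃ s : unitInterval, ∃ t ∈ Set.Icc 0 ℓ, dist (P s) (γ t) ≤ K / 8 := by
    by_contra! hno
    have hx' := hno 0
    have hy' := hno 1
    rw [Path.source] at hx'
    rw [Path.target] at hy'
    rcases hxc with ⟨s, rfl⟩ | h | h
    · rcases hyc with ⟨u, rfl⟩ | h | h
      · exact hBmax.not_joinedIn hX hsep s u ⟨P, fun v t ht => (hno v t ht).le⟩
      · exact (hy' _ C.ht0).not_ge (dist_comm y _ ▸ h)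
      · exact (hy' _ C.ht1).not_ge (dist_comm y _ ▸ h)
    · exact (hx' _ B.ht0).not_ge (dist_comm x _ ▸ h)
    · exact (hx' _ B.ht1).not_ge (dist_comm x _ ▸ h)
  obtain ⟨s, t, ht, htB, hst⟩ : ∃ (s : unitInterval) (t : ℝ), t ∈ Set.Icc 0 ℓ ∧ t ≤ B.t1 ∧
      dist (γ t) (P s) ≤ K / 8 := by
    rcases hxc with ⟨s, rfl⟩ | h | h
    · obtain ⟨u, hj, t, ht, hd⟩ := exists_first_hit hγ P (B.spine_far s) hit
      exact ⟨u, t, ht, hBmax.le_t1 hX hj ht hd, hd.le⟩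
    · exact ⟨0, _, B.ht0, B.hle, by simpa using h⟩
    · exact ⟨0, _, B.ht1, le_rfl, by simpa using h⟩
  obtain ⟨s', t', ht', htC, hst'⟩ : ∃ (s : unitInterval) (t : ℝ), t ∈ Set.Icc 0 ℓ ∧ C.t0 ≤ t ∧
      dist (γ t) (P s) ≤ K / 8 := by
    rcases hyc with ⟨s, rfl⟩ | h | h
    · obtain ⟨v, t, ht, hv⟩ := hit
      obtain ⟨u, hj, t, ht, hd⟩ := exists_first_hit hγ P.symm (C.spine_far s)
        ⟨unitInterval.symm v, t, ht, by simpa using hv⟩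
      exact ⟨unitInterval.symm u, t, ht, hCmax.t0_le hX hj ht hd, hd.le⟩
    · exact ⟨1, _, C.ht0, le_rfl, by simpa using h⟩
    · exact ⟨1, _, C.ht1, C.hle, by simpa using h⟩
  have h4 : dist (γ t) (γ t') ≤ dist (γ t) (P s) + dist (P s) (P s') + dist (P s') (γ t') :=
    dist_triangle4 _ _ _ _
  rw [hgeo t ht t' ht', dist_comm (P s')] at h4
  rw [hgeo _ B.ht1 _ C.ht0, abs_sub_comm, abs_of_pos (sub_pos.2 hsep)]
  have h5 := neg_abs_le (t - t')
  have h6 := hPd s s'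
  linarith
end

section
/- Let G be a graph with bounded vertex degrees which contains an infinite set of pairwise disjoint rays. Then G has a pair of diverging rays. -/
/-! Rays in different components diverge, so let all rays lie in one component, fix a vertex `o` of it
and a geodesic ray `P` from `o`. Write `|v|` for the distance of `v` from `o`.

*Rescaling.* Give every edge `uv` the weight `φ |u| + φ |v|`, where `φ` decreases to `0` so slowly
that `∑ φ` diverges and that balls of weighted radius `2100` around late vertices of `P` have few
vertices compared with the number of disjoint rays starting at a moderate distance from `o`. Such a
ball misses one of these rays completely, so it does not separate `o` from infinity
(`exists_weights`). It now suffices to find two rays at weighted distance more than `1`: since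
`φ → 0`, they diverge. By compactness (`exists_separated`), it suffices to find two such walks, from
a fixed finite set of vertices to any given level (`Frame.exists_walks`).

*Augmenting paths.* These walks come from an argument in the style of Menger's theorem, in which `P`
plays the role of the first path. The zone consists of the vertices within distance `8` of `P`. In an
auxiliary network (`Frame.Reach`) one moves through `G` and pays for the edges touching the zone,
lands on `P` from just outside the zone at a cost of `5`, and, having landed at `P b`, may leave
again close to any `P a`; this is free if `a` is well below `b`, and otherwise its price increases
slowly with `a`. The target is the set of vertices of high potential outside the zone, where the
potential of `v` is `∑ i < |v|, φ i`. Since balls around `P j` do not separate, some walk outside the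
zone bypasses `P j` by a margin of `1000` (`Frame.jump`). Hence the network contains a path to the
target, and progress by `1000` along `P` need not cost more than `5`.

*Near-optimality.* Take a network path whose cost is within `1` of the infimum (`Frame.Opt`). Cut at
its landings, it falls into runs, the `t`-th of which leaves base index `b_t` close to `P a_t`. Any
shortcut that would save at least `1` is impossible. Hence different runs are far apart
(`Opt.not_near_run`), runs avoid `P` (`Opt.not_near_P`) and the links of other runs to `P`
(`Opt.not_near_link`), and the indices satisfy `a_t < a_{t+1}`, `b_t < b_{t+1}`, `a_t < b_t` and
`b_t < a_{t+2}` with some margin. So the segments of `P` between `b_t` and `a_{t+1}` are far apart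
from each other. Alternating between runs and segments gives two walks, one using the runs and
segments with even numbers and the other those with odd numbers, where the segment from `b_t` to
`a_{t+1}` has number `t + 1` (`Opt.joined`). These two walks are separated (`Opt.terr_sep`).
-/

open Filter

namespace DivRays

variable {V : Type*} {G : SimpleGraph V}

/-! ### Costs of walks -/

/-- The total cost of a walk for an edge-cost function `c`. -/
def cost (c : V → V → ℝ) : {u v : V} → G.Walk u v → ℝ
  | _, _, .nil => 0
  | _, _, .cons (u := u) (v := v) _ p => c u v + cost c p

section cost
variable {c c' : V → V → ℝ} {u v w : V}

@[simp] lemma cost_nil : cost c (.nil : G.Walk u u) = 0 := rfl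

@[simp] lemma cost_cons (h : G.Adj u v) (p : G.Walk v w) :
    cost c (.cons h p) = c u v + cost c p := rfl

@[simp] lemma cost_append (p : G.Walk u v) (q : G.Walk v w) :
    cost c (p.append q) = cost c p + cost c q := by
  induction p with
  | nil => simp
  | cons h p ih => simp [ih, add_assoc]

lemma cost_reverse (hc : ∀ u v, c u v = c v u) (p : G.Walk u v) :
    cost c p.reverse = cost c p := by
  induction p with
  | nil => simp
  | cons h p ih => simp [ih, hc, add_comm]

lemma cost_nonneg (hc : ∀ u v, 0 ≤ c u v) (p : G.Walk u v) : 0 ≤ cost c p := by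
  induction p with
  | nil => simp
  | cons h p ih => simpa using add_nonneg (hc _ _) ih

lemma cost_mono (hc : ∀ u v, c u v ≤ c' u v) (p : G.Walk u v) : cost c p ≤ cost c' p := by
  induction p with
  | nil => simp
  | cons h p ih => simpa using add_le_add (hc _ _) ih

lemma cost_eq_zero {S : Set V} (hc : ∀ u ∈ S, ∀ v ∈ S, c u v = 0) (p : G.Walk u v)
    (hp : ∀ x ∈ p.support, x ∈ S) : cost c p = 0 := by
  induction p with
  | nil => simp
  | cons h p ih =>
    simp only [SimpleGraph.Walk.support_cons, List.mem_cons, forall_eq_or_imp] at hp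
    rw [cost_cons, ih hp.2, hc _ hp.1 _ (hp.2 _ p.start_mem_support), add_zero]

/-- A walk visiting `x` splits at `x`. -/
lemma exists_split (p : G.Walk u v) {x : V} (hx : x ∈ p.support) :
    ∃ (q : G.Walk u x) (q' : G.Walk x v), p = q.append q' :=
  SimpleGraph.Walk.mem_support_iff_exists_append.1 hx

/-- The segment of an infinite walk `W` between the times `s` and `t`. -/
lemma exists_segment {W : ℕ → V} (hW : ∀ t, G.Adj (W t) (W (t + 1))) {s t : ℕ} (hst : s ≤ t) :
    ∃ p : G.Walk (W s) (W t), ∀ x ∈ p.support, ∃ i, s ≤ i ∧ i ≤ t ∧ x = W i := by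
  induction t, hst using Nat.le_induction with
  | base => exact ⟨.nil, fun x hx => ⟨s, le_rfl, le_rfl, by simpa using hx⟩⟩
  | succ t hst ih =>
    obtain ⟨p, hp⟩ := ih
    refine ⟨p.concat (hW t), fun x hx => ?_⟩
    rw [SimpleGraph.Walk.support_concat, List.mem_append] at hx
    rcases hx with hx | hx
    · obtain ⟨i, h1, h2, h3⟩ := hp x hx
      exact ⟨i, h1, by omega, h3⟩
    · exact ⟨t + 1, by omega, le_rfl, by simpa using hx⟩

end cost

/-! ### Weighted frames -/

/-- The weighted graph in which the augmenting-path argument takes place: symmetric edge weights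
`wt`, a potential `pot` that is `1`-Lipschitz for them, and a base ray `P` along which the weights
are controlled by the increments of the potential. By `wander`, beyond the index `i₀` no ball of
radius `2100` around a vertex of `P` separates `P 0` from infinity. -/
structure Frame (G : SimpleGraph V) where
  wt : V → V → ℝ
  wt_symm : ∀ u v, wt u v = wt v u
  wt_nonneg : ∀ u v, 0 ≤ wt u v
  wt_le : ∀ u v, wt u v ≤ 1 / 2
  pot : V → ℝ
  pot_adj : ∀ u v, G.Adj u v → pot v ≤ pot u + wt u v
  P : ℕ → V
  P_adj : ∀ i, G.Adj (P i) (P (i + 1))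
  pot_mono : Monotone fun i => pot (P i)
  pot_tendsto : Tendsto (fun i => pot (P i)) atTop atTop
  wt_P : ∀ i, wt (P i) (P (i + 1)) ≤ 2 * (pot (P (i + 1)) - pot (P i))
  i₀ : ℕ
  wander : ∀ j ≥ i₀, ∃ W : ℕ → V, W 0 = P 0 ∧ (∀ t, G.Adj (W t) (W (t + 1))) ∧
    Tendsto (fun t => pot (W t)) atTop atTop ∧
    ∀ t (p : G.Walk (P j) (W t)), 2100 < cost wt p

namespace Frame

variable (f : Frame G) {u v w x y : V} {a b i j : ℕ} {r s : ℝ}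

/-- The potential along the base ray. -/
def F (i : ℕ) : ℝ := f.pot (f.P i)

/-- `u` and `v` are joined by a walk of weight at most `r`. -/
def Near (r : ℝ) (u v : V) : Prop := ∃ p : G.Walk u v, cost f.wt p ≤ r

/-- The zone: the vertices within distance `8` of the base ray. -/
def Zone (v : V) : Prop := ∃ j, f.Near 8 (f.P j) v

/-- `x` lies just outside the zone, within distance `9` of the vertex of the base ray with
index `a`. -/
def Contact (a : ℕ) (x : V) : Prop := ¬ f.Zone x ∧ f.Near 9 (f.P a) x

open Classical in
/-- The zone cost of an edge: its weight if it touches the zone, and `0` otherwise. -/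
noncomputable def zc (u v : V) : ℝ := if f.Zone u ∨ f.Zone v then f.wt u v else 0

variable {f}

lemma F_mono (h : i ≤ j) : f.F i ≤ f.F j := f.pot_mono h

lemma lt_of_F_lt (h : f.F i < f.F j) : i < j := by
  by_contra! hc
  exact absurd (F_mono hc) (not_le.2 h)

lemma Near.mono (h : f.Near r u v) (hrs : r ≤ s) : f.Near s u v :=
  h.imp fun _ hp => hp.trans hrs

lemma Near.symm (h : f.Near r u v) : f.Near r v u := by
  obtain ⟨p, hp⟩ := h
  exact ⟨p.reverse, by rwa [cost_reverse f.wt_symm]⟩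

lemma Near.trans (h : f.Near r u v) (h' : f.Near s v w) : f.Near (r + s) u w := by
  obtain ⟨p, hp⟩ := h
  obtain ⟨q, hq⟩ := h'
  exact ⟨p.append q, by rw [cost_append]; exact add_le_add hp hq⟩

lemma near_adj (h : G.Adj u v) : f.Near (f.wt u v) u v := ⟨.cons h .nil, by simp⟩

lemma near_walk (p : G.Walk u v) : f.Near (cost f.wt p) u v := ⟨p, le_rfl⟩

lemma pot_walk (p : G.Walk u v) : f.pot v ≤ f.pot u + cost f.wt p := by
  induction p with
  | nil => simp
  | cons h p ih =>
    rw [cost_cons]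
    linarith [f.pot_adj _ _ h]

lemma Near.pot_le (h : f.Near r u v) : f.pot v ≤ f.pot u + r := by
  obtain ⟨p, hp⟩ := h
  linarith [pot_walk (f := f) p]

lemma near_P (hij : i ≤ j) : f.Near (2 * (f.F j - f.F i)) (f.P i) (f.P j) := by
  induction j, hij using Nat.le_induction with
  | base => exact ⟨.nil, by simp⟩
  | succ j hij ih =>
    refine (ih.trans (near_adj (f.P_adj j))).mono ?_
    have := f.wt_P j
    unfold F
    linarith

lemma zc_symm (u v : V) : f.zc u v = f.zc v u := by
  by_cases hu : f.Zone u <;> by_cases hv : f.Zone v <;> simp [zc, hu, hv, f.wt_symm u v]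

lemma zc_nonneg (u v : V) : 0 ≤ f.zc u v := by
  unfold zc
  split_ifs
  exacts [f.wt_nonneg _ _, le_rfl]

lemma zc_le (u v : V) : f.zc u v ≤ f.wt u v := by
  unfold zc
  split_ifs
  exacts [le_rfl, f.wt_nonneg _ _]

lemma zc_of_zone (h : f.Zone u) : f.zc u v = f.wt u v := by
  simp [zc, h]

/-- Climbing out of the zone from a vertex at distance `r` from the base ray costs at least
`8 - r`. -/
lemma climb (p : G.Walk w y) (hw : f.Near r (f.P j) w) (hy : ¬ f.Zone y) :
    8 - r ≤ cost f.zc p := by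
  induction p generalizing r with
  | nil =>
    by_contra! hc
    exact hy ⟨j, hw.mono (by simp at hc; linarith)⟩
  | @cons u v y h p ih =>
    rw [cost_cons]
    by_cases hu : f.Zone u
    · rw [zc_of_zone hu]
      linarith [ih (hw.trans (near_adj h)) hy]
    · have : 8 < r := by
        by_contra! hc
        exact hu ⟨j, hw.mono hc⟩
      linarith [f.zc_nonneg u v, cost_nonneg (c := f.zc) zc_nonneg p]

/-- A walk from the zone to its complement pays its full weight until it first leaves the zone,
which happens at a contact vertex. -/
lemma first_exit (p : G.Walk w y) (hw : f.Zone w) (hy : ¬ f.Zone y) :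
    ∃ (u : V) (i : ℕ) (q : G.Walk w u) (q' : G.Walk u y), f.Contact i u ∧
      p = q.append q' ∧ cost f.zc q = cost f.wt q := by
  induction p with
  | nil => exact absurd hw hy
  | @cons w v y h p ih =>
    by_cases hv : f.Zone v
    · obtain ⟨u, i, q, q', hu, hp, hq⟩ := ih hv hy
      exact ⟨u, i, .cons h q, q', hu, by simp [hp], by simp [hq, zc_of_zone hw]⟩
    · obtain ⟨i, hi⟩ := hw
      refine ⟨v, i, .cons h .nil, p, ⟨hv, ?_⟩, by simp, by simp [zc_of_zone ⟨i, hi⟩]⟩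
      exact (hi.trans (near_adj h)).mono (by linarith [f.wt_le w v])

/-- Every base vertex `P j` with `j ≥ i₀` can be bypassed outside the zone: there is a walk from a
contact vertex whose index lies below `j` by at least `1000` in terms of the potential, either to a
contact vertex whose index lies above `j` by at least `1000`, or to an arbitrarily high level `B`.
It is the part of the walk given by `wander` between its last visit to the part of the zone around
`P 0, …, P j` and its next visit to the zone. -/
lemma jump (hj : f.i₀ ≤ j) (B : ℝ) :
    ∃ (a : ℕ) (x y : V) (z : G.Walk x y), f.Contact a x ∧ f.F a + 1000 ≤ f.F j ∧
      cost f.zc z = 0 ∧ ¬ f.Zone y ∧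
      (B ≤ f.pot y ∨ ∃ b, f.Contact b y ∧ f.F j + 1000 ≤ f.F b) := by
  obtain ⟨W, hW0, hW, hWt, hWj⟩ := f.wander j hj
  have key1 : ∀ t i, i ≤ j → f.Near 9 (f.P i) (W t) → f.F i + 1000 ≤ f.F j := by
    intro t i hi h
    by_contra! hc
    obtain ⟨p, hp⟩ := ((near_P hi).symm.trans h)
    linarith [hWj t p]
  have key2 : ∀ t i, j ≤ i → f.Near 9 (f.P i) (W t) → f.F j + 1000 ≤ f.F i := by
    intro t i hi h
    by_contra! hc
    obtain ⟨p, hp⟩ := ((near_P hi).trans h)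
    linarith [hWj t p]
  obtain ⟨T, hT⟩ := (hWt.eventually (eventually_gt_atTop (f.F j + 8))).exists_forall_of_atTop
  classical
  let S : ℕ → Prop := fun t => ∃ i ≤ j, f.Near 8 (f.P i) (W t)
  have hS0 : S 0 := ⟨0, Nat.zero_le _, by rw [hW0]; exact ⟨.nil, by simp⟩⟩
  have hST : ∀ t, S t → t ≤ T := by
    rintro t ⟨i, hi, hn⟩
    by_contra! hc
    have h1 := hT t hc.le
    have h2 := hn.pot_le
    have h3 := F_mono (f := f) hi
    unfold F at *
    linarith
  set t₁ := Nat.findGreatest S T with ht₁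
  have hS1 : S t₁ := Nat.findGreatest_spec (P := S) (Nat.zero_le T) hS0
  have hSgt : ∀ t, t₁ < t → ¬ S t := fun t ht hs =>
    Nat.findGreatest_is_greatest (P := S) ht (hST t hs) hs
  obtain ⟨a, haj, ha⟩ := hS1
  have step : ∀ t i, f.Near 8 (f.P i) (W t) → f.Near 9 (f.P i) (W (t + 1)) := fun t i h =>
    (h.trans (near_adj (hW t))).mono (by linarith [f.wt_le (W t) (W (t + 1))])
  have step' : ∀ t i, f.Near 8 (f.P i) (W (t + 1)) → f.Near 9 (f.P i) (W t) := fun t i h =>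
    (h.trans (near_adj (hW t).symm)).mono (by linarith [f.wt_le (W (t + 1)) (W t)])
  have hgt : ∀ t i, t₁ < t → f.Near 8 (f.P i) (W t) → j < i := by
    intro t i ht hi
    by_contra! hc
    exact hSgt t ht ⟨i, hc, hi⟩
  have hxZ : ¬ f.Zone (W (t₁ + 1)) := by
    rintro ⟨i, hi⟩
    have h1 := hgt _ _ (Nat.lt_succ_self _) hi
    have h2 := key2 _ i h1.le (step' _ _ hi)
    have h3 := key1 _ a haj (step _ _ ha)
    have h4 := ((step _ _ ha).trans hi.symm).pot_le
    unfold F at *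
    linarith
  obtain ⟨T', hT'⟩ := (hWt.eventually (eventually_ge_atTop B)).exists_forall_of_atTop
  have hex : ∃ t, t₁ + 1 ≤ t ∧ (B ≤ f.pot (W t) ∨ f.Zone (W (t + 1))) :=
    ⟨max T' (t₁ + 1), le_max_right _ _, Or.inl (hT' _ (le_max_left _ _))⟩
  obtain ⟨ht2, ht2'⟩ := Nat.find_spec hex
  have hmin := fun t => Nat.find_min hex (m := t)
  set t₂ := Nat.find hex
  have hout : ∀ t, t₁ + 1 ≤ t → t ≤ t₂ → ¬ f.Zone (W t) := by
    intro t h1 h2 hz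
    rcases Nat.eq_or_lt_of_le h1 with h | h
    · exact hxZ (h ▸ hz)
    · obtain ⟨t', rfl⟩ : ∃ t', t = t' + 1 := ⟨t - 1, by omega⟩
      exact hmin t' (by omega) ⟨by omega, Or.inr hz⟩
  obtain ⟨z, hz⟩ := exists_segment hW ht2
  refine ⟨a, W (t₁ + 1), W t₂, z, ⟨hxZ, step _ _ ha⟩, key1 _ a haj (step _ _ ha), ?_,
    hout _ ht2 le_rfl, ht2'.imp id ?_⟩
  · refine cost_eq_zero (S := {v | ¬ f.Zone v}) (fun u hu v hv => ?_) z ?_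
    · exact if_neg (not_or.2 ⟨hu, hv⟩)
    · intro x hx
      obtain ⟨i, h1, h2, rfl⟩ := hz x hx
      exact hout i h1 h2
  · rintro ⟨b, hb⟩
    have h1 := hgt _ _ (by omega) hb
    exact ⟨b, ⟨hout _ ht2 le_rfl, step' _ _ hb⟩, key2 _ b h1.le (step' _ _ hb)⟩

end Frame

namespace Frame

/-! ### The auxiliary network -/

section network
variable {f : Frame G} {u v w x y : V} {a b i j n : ℕ} {r s c c' B : ℝ} {X Y Z : V ⊕ ℕ}

/-- The cost of leaving the base vertex with index `b` through a contact vertex of index `a`: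
free if `a` lies sufficiently far below `b`, and growing linearly in the potential of `a`. -/
noncomputable def ec (f : Frame G) (b a : ℕ) : ℝ := max 0 ((f.F a - f.F b + 100) / 10)

/-- `f.Reach X Y c`: in the auxiliary network there is a path from `X` to `Y` of cost at most `c`.
The nodes are the vertices of `G` and the indices of the base ray. Moving along an edge of `G` costs
its zone cost, landing from a contact vertex on its base index costs `5`, and leaving from the base
index `b` to a contact vertex of index `a` costs `ec b a`. -/
inductive Reach (f : Frame G) (X : V ⊕ ℕ) : V ⊕ ℕ → ℝ → Prop
  | refl {c : ℝ} (hc : 0 ≤ c) : Reach f X X c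
  | edge {u v : V} {c c' : ℝ} (h : Reach f X (.inl u) c) (huv : G.Adj u v)
      (hc : c + f.zc u v ≤ c') : Reach f X (.inl v) c'
  | land {y : V} {b : ℕ} {c c' : ℝ} (h : Reach f X (.inl y) c) (hy : f.Contact b y)
      (hc : c + 5 ≤ c') : Reach f X (.inr b) c'
  | exit {b a : ℕ} {x : V} {c c' : ℝ} (h : Reach f X (.inr b) c) (hx : f.Contact a x)
      (hc : c + f.ec b a ≤ c') : Reach f X (.inl x) c'

/-- A vertex outside the zone with potential at least `B` is reachable from `X` at cost at
most `c`. -/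
def ReachT (f : Frame G) (B : ℝ) (X : V ⊕ ℕ) (c : ℝ) : Prop :=
  ∃ y, ¬ f.Zone y ∧ B ≤ f.pot y ∧ f.Reach X (.inl y) c

lemma ec_nonneg : 0 ≤ f.ec b a := le_max_left _ _

lemma Reach.nonneg (h : f.Reach X Y c) : 0 ≤ c := by
  induction h with
  | refl hc => exact hc
  | @edge u v _ _ _ _ hc ih => linarith [f.zc_nonneg u v]
  | land _ _ hc ih => linarith
  | @exit b a _ _ _ _ _ hc ih => linarith [f.ec_nonneg (b := b) (a := a)]

lemma Reach.mono (h : f.Reach X Y c) (hc : c ≤ c') : f.Reach X Y c' := by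
  cases h with
  | refl h0 => exact .refl (h0.trans hc)
  | edge h h1 h2 => exact .edge h h1 (h2.trans hc)
  | land h h1 h2 => exact .land h h1 (h2.trans hc)
  | exit h h1 h2 => exact .exit h h1 (h2.trans hc)

lemma Reach.trans (h : f.Reach X Y c) (h' : f.Reach Y Z c') : f.Reach X Z (c + c') := by
  induction h' with
  | refl hc => exact h.mono (by linarith)
  | edge _ h1 hc ih => exact .edge ih h1 (by linarith)
  | land _ h1 hc ih => exact .land ih h1 (by linarith)
  | exit _ h1 hc ih => exact .exit ih h1 (by linarith)

lemma Reach.transT (h : f.Reach X Y c) (h' : f.ReachT B Y c') : f.ReachT B X (c + c') := by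
  obtain ⟨y, h1, h2, h3⟩ := h'
  exact ⟨y, h1, h2, h.trans h3⟩

lemma ReachT.mono (h : f.ReachT B X c) (hc : c ≤ c') : f.ReachT B X c' := by
  obtain ⟨y, h1, h2, h3⟩ := h
  exact ⟨y, h1, h2, h3.mono hc⟩

lemma reach_walk (p : G.Walk u v) : f.Reach (.inl u) (.inl v) (cost f.zc p) := by
  induction p with
  | nil => exact .refl (by simp)
  | cons h p ih =>
    rw [cost_cons]
    exact (Reach.edge (.refl le_rfl) h (by simp)).trans ih

lemma Near.reach (h : f.Near r u v) : f.Reach (.inl u) (.inl v) r := by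
  obtain ⟨p, hp⟩ := h
  exact (reach_walk p).mono ((cost_mono zc_le p).trans hp)

lemma reach_land (h : f.Contact b y) : f.Reach (.inl y) (.inr b) 5 :=
  .land (.refl le_rfl) h (by simp)

lemma reach_exit (h : f.Contact a x) : f.Reach (.inr b) (.inl x) (f.ec b a) :=
  .exit (.refl le_rfl) h (by simp)

/-- From the base index `j` one reaches the target for free or a base index that lies above `j` by at
least `1000` at cost `5`. -/
lemma hop (hj : f.i₀ ≤ j) (B : ℝ) :
    f.ReachT B (.inr j) 0 ∨ ∃ b, f.F j + 1000 ≤ f.F b ∧ f.F b ≤ B + 9 ∧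
      f.Reach (.inr j) (.inr b) 5 := by
  obtain ⟨a, x, y, z, hx, hF, hz, hy, h⟩ := f.jump hj B
  have h0 : f.ec j a = 0 := max_eq_left (by linarith)
  have hr : f.Reach (.inr j) (.inl y) 0 := by
    have := (reach_exit (b := j) hx).trans (reach_walk z)
    rwa [h0, hz, add_zero] at this
  by_cases hB : B ≤ f.pot y
  · exact Or.inl ⟨y, hy, hB, hr⟩
  · obtain ⟨b, hb, hFb⟩ := h.resolve_left hB
    refine Or.inr ⟨b, hFb, ?_, (hr.trans (reach_land hb)).mono (by norm_num)⟩
    have := hb.2.symm.pot_le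
    unfold F
    linarith

lemma hops (hj : f.i₀ ≤ j) (B : ℝ) (n : ℕ) :
    f.ReachT B (.inr j) (5 * n) ∨ ∃ b ≥ j, f.F j + 1000 * n ≤ f.F b ∧ (n = 0 ∨ f.F b ≤ B + 9) ∧
      f.Reach (.inr j) (.inr b) (5 * n) := by
  induction n with
  | zero => exact Or.inr ⟨j, le_rfl, by simp, Or.inl rfl, .refl (by simp)⟩
  | succ n ih =>
    push_cast
    rcases ih with h | ⟨b, hjb, hb, -, hr⟩
    · exact Or.inl (h.mono (by linarith))
    · rcases hop (hj.trans hjb) B with h | ⟨b', h1, h2, h3⟩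
      · exact Or.inl ((hr.transT h).mono (by linarith))
      · exact Or.inr ⟨b', hjb.trans (lt_of_F_lt (f := f) (by linarith)).le, by linarith,
          Or.inr h2, (hr.trans h3).mono (by linarith)⟩

/-- A contact vertex whose index exceeds `j` by at most `1000 n - 100` in terms of the potential is
reachable from `j` at cost `5 n`, unless the target is reached on the way: after `n` hops it can be
left for free. -/
lemma detour (hj : f.i₀ ≤ j) (B : ℝ) (n : ℕ) (hx : f.Contact a x)
    (ha : f.F a + 100 ≤ f.F j + 1000 * n) :
    f.ReachT B (.inr j) (5 * n) ∨ f.Reach (.inr j) (.inl x) (5 * n) := by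
  refine (hops hj B n).imp id ?_
  rintro ⟨b, -, hb, -, hr⟩
  refine (hr.trans (reach_exit hx)).mono ?_
  have : f.ec b a = 0 := max_eq_left (by linarith)
  rw [this, add_zero]

lemma exists_reachT (hj : f.i₀ ≤ j) (B : ℝ) : ∃ c, f.ReachT B (.inr j) c := by
  obtain ⟨n, hn⟩ := exists_nat_gt (B + 9 - f.F j)
  rcases hops hj B (n + 1) with h | ⟨b, -, h1, h2, h3⟩
  · exact ⟨_, h⟩
  · have h2 := h2.resolve_left (by omega)
    push_cast at h1
    have : (0 : ℝ) ≤ n := n.cast_nonneg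
    linarith

end network

/-! ### Plans -/

/-- A run: leave the base index `b` through the contact vertex `x` of index `a`, then follow the
walk `z` to `y`. -/
structure Run (G : SimpleGraph V) where
  b : ℕ
  a : ℕ
  x : V
  y : V
  z : G.Walk x y

section plan
variable {f : Frame G} {u v w x y : V} {a b i j n t s : ℕ} {r : ℕ → Run G} {c c' B : ℝ}
  {X Y Z : V ⊕ ℕ}

/-- The cost of the first `t` runs, including the landings after each of them. -/
noncomputable def C (f : Frame G) (r : ℕ → Run G) : ℕ → ℝ
  | 0 => 0
  | t + 1 => C f r t + f.ec (r t).b (r t).a + cost f.zc (r t).z + 5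

/-- The cost up to the vertex at which run `t` begins. -/
noncomputable def E (f : Frame G) (r : ℕ → Run G) (t : ℕ) : ℝ :=
  f.C r t + f.ec (r t).b (r t).a

/-- The total cost of the runs `0, …, n`. -/
noncomputable def tot (f : Frame G) (r : ℕ → Run G) (n : ℕ) : ℝ :=
  f.E r n + cost f.zc (r n).z

/-- The runs `0, …, n` form a path in the auxiliary network starting at the base index `i₀`. -/
structure Valid (f : Frame G) (r : ℕ → Run G) (n : ℕ) : Prop where
  start : (r 0).b = f.i₀
  exit : ∀ t ≤ n, f.Contact (r t).a (r t).x
  land : ∀ t < n, f.Contact (r (t + 1)).b (r t).y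

lemma C_succ : f.C r (t + 1) = f.E r t + cost f.zc (r t).z + 5 := rfl

lemma C_congr {r' : ℕ → Run G} (h : ∀ s < t, r s = r' s) : f.C r t = f.C r' t := by
  induction t with
  | zero => rfl
  | succ t ih =>
    rw [C_succ, C_succ, E, E, ih fun s hs => h s (by omega), h t (by omega)]

/-- A path of the auxiliary network starting at `i₀` decomposes into runs. -/
lemma exists_plan (h : f.Reach (.inr f.i₀) Y c) :
    Sum.elim (fun y => ∃ r n, f.Valid r n ∧ (r n).y = y ∧ f.tot r n ≤ c)
      (fun b => (b = f.i₀ ∧ 0 ≤ c) ∨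
        ∃ r n, f.Valid r n ∧ f.Contact b (r n).y ∧ f.tot r n + 5 ≤ c) Y := by
  induction h with
  | refl hc => exact Or.inl ⟨rfl, hc⟩
  | @edge u v c c' h huv hc ih =>
    obtain ⟨r, n, hr, rfl, ht⟩ := ih
    refine ⟨Function.update r n ⟨(r n).b, (r n).a, (r n).x, v, (r n).z.concat huv⟩, n,
      ⟨?_, fun t ht => ?_, fun t ht => ?_⟩, by simp, ?_⟩
    · by_cases h0 : n = 0
      · subst h0; simpa using hr.start
      · rw [Function.update_of_ne (Ne.symm h0)]; exact hr.start
    · rcases eq_or_ne t n with rfl | hn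
      · simpa using hr.exit t ht
      · rw [Function.update_of_ne hn]; exact hr.exit t ht
    · rw [Function.update_of_ne ht.ne]
      rcases eq_or_ne (t + 1) n with rfl | hn
      · simpa using hr.land t ht
      · rw [Function.update_of_ne hn]; exact hr.land t ht
    · rw [tot, E, C_congr (r' := r) fun s hs => Function.update_of_ne hs.ne _ _]
      have hz := congrArg (fun R : Run G => cost f.zc R.z) (Function.update_self (β := fun _ => Run G)
        n ⟨(r n).b, (r n).a, (r n).x, v, (r n).z.concat huv⟩ r)
      simp only [SimpleGraph.Walk.concat_eq_append, cost_append, cost_cons, cost_nil] at hz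
      simp only [SimpleGraph.Walk.concat_eq_append, hz, Function.update_self]
      rw [tot, E] at ht
      linarith
  | @land y b c c' h hy hc ih =>
    obtain ⟨r, n, hr, rfl, ht⟩ := ih
    exact Or.inr ⟨r, n, hr, hy, by linarith⟩
  | @exit b a x c c' h hx hc ih =>
    rcases ih with ⟨rfl, h0⟩ | ⟨r, n, hr, hb, ht⟩
    · refine ⟨fun _ => ⟨f.i₀, a, x, x, .nil⟩, 0, ⟨rfl, fun _ _ => hx, fun t ht => by omega⟩, rfl, ?_⟩
      simp only [tot, E, C, cost_nil]
      linarith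
    · refine ⟨fun t => if t ≤ n then r t else ⟨b, a, x, x, .nil⟩, n + 1,
        ⟨?_, fun t ht => ?_, fun t ht => ?_⟩, by simp, ?_⟩
      · simpa using hr.start
      · by_cases h : t ≤ n
        · simpa [h] using hr.exit t h
        · simpa [h] using hx
      · have h1 : t ≤ n := by omega
        by_cases h : t + 1 ≤ n
        · simpa [h, h1] using hr.land t h
        · obtain rfl : t = n := by omega
          simpa using hb
      · have hC := C_congr (f := f) (t := n + 1)
          (r := fun t => if t ≤ n then r t else ⟨b, a, x, x, .nil⟩) (r' := r)
          fun s hs => if_pos (by omega)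
        have hr' : (if n + 1 ≤ n then r (n + 1) else (⟨b, a, x, x, .nil⟩ : Run G)) =
          ⟨b, a, x, x, .nil⟩ := if_neg (by omega)
        have hz := congrArg (fun R : Run G => cost f.zc R.z) hr'
        simp only [cost_nil] at hz
        rw [tot, E, hC, C_succ]
        simp only [hz, hr']
        rw [tot] at ht
        linarith

/-- The runs `0, …, n` form a path from `i₀` to a target whose cost is within `1` of the
infimum. -/
structure Opt (f : Frame G) (B : ℝ) (r : ℕ → Run G) (n : ℕ) : Prop extends f.Valid r n where
  not_zone : ¬ f.Zone (r n).y
  le_pot : B ≤ f.pot (r n).y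
  opt : ∀ c, f.ReachT B (.inr f.i₀) c → f.tot r n < c + 1

lemma exists_opt (f : Frame G) (B : ℝ) : ∃ r n, f.Opt B r n := by
  obtain ⟨c₀, hc₀⟩ := f.exists_reachT le_rfl B
  have hbdd : BddBelow {c | f.ReachT B (.inr f.i₀) c} := ⟨0, by rintro c ⟨y, -, -, h⟩; exact h.nonneg⟩
  obtain ⟨c, hc, hlt⟩ := exists_lt_of_csInf_lt ⟨c₀, hc₀⟩
    (lt_add_one (sInf {c | f.ReachT B (.inr f.i₀) c}))
  obtain ⟨y, h1, h2, h3⟩ := hc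
  obtain ⟨r, n, hr, rfl, ht⟩ := exists_plan h3
  refine ⟨r, n, ⟨hr, h1, h2, fun c' hc' => ?_⟩⟩
  linarith [csInf_le hbdd hc']

end plan

/-! ### Consequences of near-optimality -/

section opt
variable {f : Frame G} {u v w x y : V} {a b i j n m t s : ℕ} {r : ℕ → Run G} {c c' ℓ ℓ' B T ρ : ℝ}
  {X Y Z : V ⊕ ℕ}

/-- The node `X` lies at position `ℓ` on a path of cost `T` from `i₀` to a target. -/
def On (f : Frame G) (B T : ℝ) (X : V ⊕ ℕ) (ℓ : ℝ) : Prop :=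
  f.Reach (.inr f.i₀) X ℓ ∧ f.ReachT B X (T - ℓ)

lemma Opt.ltT (h : f.Opt B r n) (hX : f.On B (f.tot r n) X ℓ) (hc : f.ReachT B X c) :
    f.tot r n < ℓ + c + 1 :=
  h.opt _ (hX.1.transT hc)

/-- No shortcut between two nodes of a near-optimal path saves a cost of `1` or more. -/
lemma Opt.lt (h : f.Opt B r n) (hX : f.On B (f.tot r n) X ℓ) (hY : f.On B (f.tot r n) Y ℓ')
    (hc : f.Reach X Y c) : ℓ' < ℓ + c + 1 := by
  linarith [h.ltT hX (hc.transT hY.2)]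

lemma Opt.lt_or (h : f.Opt B r n) (hX : f.On B (f.tot r n) X ℓ) (hY : f.On B (f.tot r n) Y ℓ')
    (hc : f.ReachT B X c ∨ f.Reach X Y c) : ℓ' < ℓ + c + 1 := by
  rcases hc with hc | hc
  · obtain ⟨y, -, -, hy⟩ := hY.2
    linarith [h.ltT hX hc, hy.nonneg]
  · exact h.lt hX hY hc

lemma C_le_E : f.C r t ≤ f.E r t := le_add_of_nonneg_right ec_nonneg

lemma zc_walk_nonneg (p : G.Walk u v) : 0 ≤ cost f.zc p := cost_nonneg zc_nonneg p

lemma C_mono (h : s ≤ t) : f.C r s ≤ f.C r t := by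
  induction t, h using Nat.le_induction with
  | base => exact le_rfl
  | succ t h ih =>
    rw [C_succ]
    linarith [f.C_le_E (r := r) (t := t), f.zc_walk_nonneg (r t).z]

lemma E_lt (h : s < t) : f.E r s + cost f.zc (r s).z + 5 ≤ f.C r t :=
  (C_succ (f := f) (r := r) (t := s)).symm.le.trans (C_mono h)

lemma Opt.on_b (h : f.Opt B r n) (ht : t ≤ n) : f.On B (f.tot r n) (.inr (r t).b) (f.C r t) := by
  constructor
  · induction t with
    | zero => rw [h.start]; exact .refl le_rfl
    | succ t ih =>
      rw [C_succ, E]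
      exact (((ih (by omega)).trans (reach_exit (h.exit t (by omega)))).trans
        (reach_walk (r t).z)).trans (reach_land (h.land t ht))
  · obtain ⟨d, rfl⟩ := Nat.exists_eq_add_of_le ht
    clear ht
    induction d generalizing t with
    | zero =>
      refine ⟨(r t).y, h.not_zone, h.le_pot, ?_⟩
      refine ((reach_exit (h.exit t le_rfl)).trans (reach_walk (r t).z)).mono ?_
      change _ ≤ f.tot r t - _
      rw [tot, E]
      linarith
    | succ d ih =>
      have h1 := ih (t := t + 1) (by rwa [add_right_comm])
      rw [C_succ, E, add_right_comm] at h1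
      refine ReachT.mono ((((reach_exit (h.exit t (by omega))).trans (reach_walk (r t).z)).trans
        (reach_land (h.land t (by omega)))).transT h1) ?_
      rw [add_assoc t d 1]
      linarith

lemma Opt.not_zone_y (h : f.Opt B r n) (ht : t ≤ n) : ¬ f.Zone (r t).y := by
  rcases ht.eq_or_lt with rfl | ht
  · exact h.not_zone
  · exact (h.land t ht).1

lemma Opt.on_run (h : f.Opt B r n) (ht : t ≤ n) (q : G.Walk (r t).x v) (q' : G.Walk v (r t).y)
    (hq : (r t).z = q.append q') : f.On B (f.tot r n) (.inl v) (f.E r t + cost f.zc q) := by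
  refine ⟨((h.on_b ht).1.trans (reach_exit (h.exit t ht))).trans (reach_walk q), ?_⟩
  have hz : cost f.zc (r t).z = cost f.zc q + cost f.zc q' := by rw [hq, cost_append]
  rcases ht.eq_or_lt with rfl | ht'
  · refine ⟨(r t).y, h.not_zone, h.le_pot, (reach_walk q').mono ?_⟩
    rw [tot]
    linarith
  · refine (((reach_walk q').trans (reach_land (h.land t ht'))).transT (h.on_b ht').2).mono ?_
    rw [C_succ]
    linarith

lemma Opt.on_x (h : f.Opt B r n) (ht : t ≤ n) : f.On B (f.tot r n) (.inl (r t).x) (f.E r t) := by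
  simpa using h.on_run ht .nil (r t).z (by simp)

/-- Different runs are at distance more than `1`. -/
lemma Opt.not_near_run (h : f.Opt B r n) (hst : s < t) (ht : t ≤ n) (hu : u ∈ (r s).z.support)
    (hv : v ∈ (r t).z.support) : ¬ f.Near 1 u v := by
  intro hn
  obtain ⟨q, q', hq⟩ := exists_split _ hu
  obtain ⟨p, p', hp⟩ := exists_split _ hv
  have h1 := h.lt (h.on_run (hst.le.trans ht) q q' hq) (h.on_run ht p p' hp) hn.reach
  have h2 := f.E_lt (r := r) hst
  rw [hq, cost_append] at h2
  linarith [f.C_le_E (r := r) (t := t), f.zc_walk_nonneg q', f.zc_walk_nonneg p]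

/-- Runs stay at distance more than `1` from the base ray: a dive that deep into the zone costs
at least `14`, and between its ends the potential increases by little more than this cost, so that
landing and taking a detour would be cheaper. -/
lemma Opt.not_near_P (h : f.Opt B r n) (ht : t ≤ n) (hw : w ∈ (r t).z.support) (j : ℕ) :
    ¬ f.Near 1 (f.P j) w := by
  intro hn
  have hwz : f.Zone w := ⟨j, hn.mono (by norm_num)⟩
  obtain ⟨q, q', hq⟩ := exists_split _ hw
  have hx := (h.exit t ht).1
  have hy := h.not_zone_y ht
  obtain ⟨u, i, q₁, q₂, hu, rfl, hq₁⟩ := first_exit q' hwz hy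
  obtain ⟨u', i', p₁, p₂, hu', hp, hp₁⟩ := first_exit q.reverse hwz hx
  obtain rfl : q = p₂.reverse.append p₁.reverse := by
    rw [← SimpleGraph.Walk.reverse_append, ← hp, SimpleGraph.Walk.reverse_reverse]
  have hou := h.on_run ht ((p₂.reverse.append p₁.reverse).append q₁) q₂
    (by simp only [hq, SimpleGraph.Walk.append_assoc])
  have hou' := h.on_run ht p₂.reverse (p₁.reverse.append (q₁.append q₂))
    (by simp only [hq, SimpleGraph.Walk.append_assoc])
  rw [cost_append, cost_append, cost_reverse zc_symm p₁] at hou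
  have h7 := climb q₁ hn hu.1
  have h7' := climb p₁ hn hu'.1
  have hF : f.F i ≤ f.F i' + (cost f.zc p₁ + cost f.zc q₁) + 18 := by
    have := (((hu'.2.trans (near_walk p₁).symm).trans (near_walk q₁)).trans hu.2.symm).pot_le
    rw [hq₁, hp₁]
    unfold F
    linarith
  set σ := cost f.zc p₁ + cost f.zc q₁ with hσ
  obtain ⟨m, hm1, hm2⟩ : ∃ m : ℕ, σ + 118 ≤ 1000 * m ∧ 1000 * (m : ℝ) < σ + 1118 := by
    refine ⟨⌈(σ + 118) / 1000⌉₊, ?_, ?_⟩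
    · linarith [Nat.le_ceil ((σ + 118) / 1000)]
    · linarith [Nat.ceil_lt_add_one (a := (σ + 118) / 1000) (by linarith)]
  by_cases hi : f.i₀ ≤ i'
  · have key : f.ReachT B (.inl u') (5 + 5 * m) ∨ f.Reach (.inl u') (.inl u) (5 + 5 * m) :=
      (detour hi B m hu (by linarith)).imp (reach_land hu').transT (reach_land hu').trans
    linarith [h.lt_or hou' hou key]
  · have hi' : f.F i' ≤ f.F f.i₀ := F_mono (by omega)
    have h0 := h.on_b (Nat.zero_le n)
    rw [h.start, C] at h0
    have := h.lt_or h0 hou (detour le_rfl B m hu (by linarith))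
    have h1 := f.C_le_E (r := r) (t := t)
    have h2 := f.C_mono (r := r) (Nat.zero_le t)
    rw [C] at h2
    linarith [f.zc_walk_nonneg p₂.reverse]

/-- If a run is joined to the base ray by a short link, then other runs keep distance more
than `1` from that link. -/
lemma Opt.not_near_link (h : f.Opt B r n) (hs : s ≤ n) (ht : t ≤ n) (hst : s ≠ t)
    (hu : u ∈ (r s).z.support) (hw : w ∈ (r t).z.support) (p : G.Walk (f.P j) u)
    (hp : cost f.wt p ≤ 9) (hv : v ∈ p.support) : ¬ f.Near 1 v w := by
  intro hn
  obtain ⟨p₁, p₂, rfl⟩ := exists_split _ hv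
  rw [cost_append] at hp
  obtain ⟨q, q', hq⟩ := exists_split _ hu
  obtain ⟨l, l', hl⟩ := exists_split _ hw
  have hnw := (near_walk (f := f) p₁).trans hn
  have hcl := climb l' hnw (h.not_zone_y ht)
  have hcl' := climb l.reverse hnw (h.exit t ht).1
  rw [cost_reverse zc_symm] at hcl'
  have hou := h.on_run hs q q' hq
  have how := h.on_run ht l l' hl
  have hwu := hn.symm.trans (near_walk p₂)
  have hq0 := f.zc_walk_nonneg q
  have hq0' := f.zc_walk_nonneg q'
  have hqz : cost f.zc (r s).z = cost f.zc q + cost f.zc q' := by rw [hq, cost_append]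
  have hlz : cost f.zc (r t).z = cost f.zc l + cost f.zc l' := by rw [hl, cost_append]
  rcases lt_or_gt_of_ne hst with hst | hst
  · have h1 := h.lt hou how hwu.symm.reach
    have h2 := f.E_lt (r := r) hst
    linarith [f.C_le_E (r := r) (t := t)]
  · have h1 := h.lt how hou hwu.reach
    have h2 := f.E_lt (r := r) hst
    linarith [f.C_le_E (r := r) (t := s)]

lemma ec_le (hc : 0 ≤ c) (h : f.F a - f.F b ≤ f.F i - f.F j + 10 * c) :
    f.ec b a ≤ f.ec j i + c := by
  refine max_le (add_nonneg ec_nonneg hc) ?_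
  have : (f.F i - f.F j + 100) / 10 ≤ f.ec j i := le_max_right _ _
  linarith

/-- Successive contact indices at the beginnings of the runs increase. -/
lemma Opt.a_lt (h : f.Opt B r n) (ht : t + 1 ≤ n) : f.F (r t).a + 19 < f.F (r (t + 1)).a := by
  by_contra! hc
  have h1 := f.ec_le (a := (r (t + 1)).a) (b := (r t).b) (i := (r t).a) (j := (r t).b) (c := 1.9)
    (by norm_num) (by linarith)
  have h2 := h.lt (h.on_b (t := t) (by omega)) (h.on_x ht) (reach_exit (h.exit _ ht))
  have h3 := f.C_le_E (r := r) (t := t + 1)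
  rw [C_succ, E] at h3
  linarith [f.zc_walk_nonneg (r t).z]

/-- Successive base indices increase. -/
lemma Opt.b_lt (h : f.Opt B r n) (ht : t + 1 ≤ n) : f.F (r t).b + 19 < f.F (r (t + 1)).b := by
  by_contra! hc
  have h1 := f.ec_le (a := (r (t + 1)).a) (b := (r t).b) (i := (r (t + 1)).a)
    (j := (r (t + 1)).b) (c := 1.9) (by norm_num) (by linarith)
  have h2 := h.lt (h.on_b (t := t) (by omega)) (h.on_x ht) (reach_exit (h.exit _ ht))
  rw [E, C_succ] at h2
  linarith [f.zc_walk_nonneg (r t).z, f.C_le_E (r := r) (t := t)]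

lemma Opt.le_b (h : f.Opt B r n) (ht : t ≤ n) : f.i₀ ≤ (r t).b := by
  induction t with
  | zero => exact h.start.ge
  | succ t ih =>
    exact (ih (by omega)).trans (lt_of_F_lt (f := f) (by linarith [h.b_lt ht])).le

/-- The contact index at which a run begins lies below the base index from which it leaves. -/
lemma Opt.a_lt_b (h : f.Opt B r n) (ht : t ≤ n) : f.F (r t).a + 19 < f.F (r t).b := by
  by_contra! hc
  have he : (f.F (r t).a - f.F (r t).b + 100) / 10 ≤ f.ec (r t).b (r t).a := le_max_right _ _
  set σ := f.F (r t).a - f.F (r t).b + 100 with hσ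
  obtain ⟨m, hm1, hm2⟩ : ∃ m : ℕ, σ ≤ 1000 * m ∧ 1000 * (m : ℝ) < σ + 1000 := by
    refine ⟨⌈σ / 1000⌉₊, ?_, ?_⟩
    · linarith [Nat.le_ceil (σ / 1000)]
    · linarith [Nat.ceil_lt_add_one (a := σ / 1000) (by linarith)]
  have h1 := h.lt_or (h.on_b ht) (h.on_x ht)
    (detour (h.le_b ht) B m (h.exit t ht) (by linarith))
  rw [E] at h1
  linarith

/-- The contact index at which a run begins lies above the base index of the run two steps earlier. -/
lemma Opt.b_lt_a (h : f.Opt B r n) (ht : t + 2 ≤ n) : f.F (r t).b + 19 < f.F (r (t + 2)).a := by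
  by_contra! hc
  have h1 := h.lt_or (h.on_b (t := t) (by omega)) (h.on_x ht)
    (detour (h.le_b (by omega)) B 1 (h.exit _ ht) (by push_cast; linarith))
  have h2 := f.C_le_E (r := r) (t := t + 2)
  have h3 := f.C_le_E (r := r) (t := t + 1)
  have h4 := f.C_le_E (r := r) (t := t)
  rw [C_succ] at h2 h3
  push_cast at h1
  linarith [f.zc_walk_nonneg (r t).z, f.zc_walk_nonneg (r (t + 1)).z]

end opt

/-! ### The two separated walks -/

section sep
variable {f : Frame G} {u v w x y : V} {a b e i j n m t s : ℕ} {r : ℕ → Run G} {B : ℝ}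

lemma Opt.a_lt' (h : f.Opt B r n) (hst : s < t) (ht : t ≤ n) :
    f.F (r s).a + 19 < f.F (r t).a := by
  induction t, hst using Nat.le_induction with
  | base => exact h.a_lt ht
  | succ t hst ih => linarith [ih (by omega), h.a_lt ht]

lemma Opt.b_lt' (h : f.Opt B r n) (hst : s < t) (ht : t ≤ n) :
    f.F (r s).b + 19 < f.F (r t).b := by
  induction t, hst using Nat.le_induction with
  | base => exact h.b_lt ht
  | succ t hst ih => linarith [ih (by omega), h.b_lt ht]

lemma Opt.b_le' (h : f.Opt B r n) (hst : s ≤ t) (ht : t ≤ n) : f.F (r s).b ≤ f.F (r t).b := by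
  rcases hst.eq_or_lt with rfl | hst
  · exact le_rfl
  · linarith [h.b_lt' hst ht]

lemma Opt.a_le' (h : f.Opt B r n) (hst : s ≤ t) (ht : t ≤ n) : f.F (r s).a ≤ f.F (r t).a := by
  rcases hst.eq_or_lt with rfl | hst
  · exact le_rfl
  · linarith [h.a_lt' hst ht]

/-- The index `i` belongs to the `t`-th segment of the base ray. For `0 < t ≤ n` this segment extends
between the base index `(r (t - 1)).b` and the contact index `(r t).a`, in whichever order. The
segment `0` consists of the indices with the same potential as `(r 0).a`, and the segment `n + 1` of
those whose potential is at least that of `(r n).b`. -/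
def Seg (f : Frame G) (r : ℕ → Run G) (n t i : ℕ) : Prop :=
  ((t ≤ n ∧ f.F (r t).a ≤ f.F i) ∨ (0 < t ∧ f.F (r (t - 1)).b ≤ f.F i)) ∧
  ((t ≤ n ∧ f.F i ≤ f.F (r t).a) ∨ (0 < t ∧ t ≤ n ∧ f.F i ≤ f.F (r (t - 1)).b) ∨ t = n + 1)

/-- Different segments are far apart. -/
lemma Opt.seg_lt (h : f.Opt B r n) (hst : s < t) (ht : t ≤ n + 1) (hi : f.Seg r n s i)
    (hj : f.Seg r n t j) : f.F i + 19 < f.F j := by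
  rcases hi.2 with ⟨-, h1⟩ | ⟨h0, -, h1⟩ | h1 <;> rcases hj.1 with ⟨htn, h2⟩ | ⟨-, h2⟩
  · linarith [h.a_lt' hst htn]
  · linarith [h.a_lt_b (t := s) (by omega), h.b_le' (s := s) (t := t - 1) (by omega) (by omega)]
  · obtain ⟨s, rfl⟩ : ∃ s', s = s' + 1 := ⟨s - 1, by omega⟩
    rw [Nat.add_sub_cancel] at h1
    linarith [h.b_lt_a (t := s) (by omega), h.a_le' (s := s + 2) (t := t) (by omega) htn]
  · linarith [h.b_lt' (s := s - 1) (t := t - 1) (by omega) (by omega)]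
  · omega
  · omega

/-- The territory of parity `e`: the runs of this parity, the segments of the base ray of this
parity, and all short links between such runs and such segments. -/
def Terr (f : Frame G) (r : ℕ → Run G) (n e : ℕ) : Set V :=
  {v | (∃ t ≤ n, t % 2 = e % 2 ∧ v ∈ (r t).z.support) ∨
    ∃ s ≤ n + 1, s % 2 = e % 2 ∧ ∃ i, f.Seg r n s i ∧ (v = f.P i ∨
      ∃ t ≤ n, t % 2 = e % 2 ∧ ∃ u ∈ (r t).z.support, ∃ p : G.Walk (f.P i) u,
        cost f.wt p ≤ 9 ∧ v ∈ p.support)}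

/-- The territories of different parities are at distance more than `1`. -/
lemma Opt.terr_sep (h : f.Opt B r n) {e' : ℕ} (he : e % 2 ≠ e' % 2) (hu : u ∈ f.Terr r n e)
    (hv : v ∈ f.Terr r n e') : ¬ f.Near 1 u v := by
  have key : ∀ {e e' : ℕ}, e % 2 ≠ e' % 2 → ∀ {u v : V}, (∃ t ≤ n, t % 2 = e % 2 ∧
      u ∈ (r t).z.support) → v ∈ f.Terr r n e' → ¬ f.Near 1 u v := by
    rintro e e' he u v ⟨t, ht, hte, hu⟩ hv hn
    rcases hv with ⟨s, hs, hse, hv⟩ | ⟨s, hs, hse, i, hi, rfl | ⟨m, hm, hme, w, hw, p, hp, hv⟩⟩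
    · rcases lt_trichotomy s t with hst | rfl | hst
      · exact h.not_near_run hst ht hv hu hn.symm
      · omega
      · exact h.not_near_run hst hs hu hv hn
    · exact h.not_near_P ht hu i hn.symm
    · exact h.not_near_link hm ht (by rintro rfl; omega) hw hu p hp hv hn.symm
  have tok : ∀ {v : V} {s i : ℕ} {e : ℕ}, (v = f.P i ∨
      ∃ t ≤ n, t % 2 = e % 2 ∧ ∃ u ∈ (r t).z.support, ∃ p : G.Walk (f.P i) u,
        cost f.wt p ≤ 9 ∧ v ∈ p.support) → f.Near 9 (f.P i) v := by
    rintro v s i e (rfl | ⟨t, -, -, u, -, p, hp, hv⟩)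
    · exact ⟨.nil, by simp⟩
    · obtain ⟨p₁, p₂, rfl⟩ := exists_split _ hv
      rw [cost_append] at hp
      exact ⟨p₁, by linarith [cost_nonneg f.wt_nonneg p₂]⟩
  intro hn
  rcases hu with hu | ⟨s, hs, hse, i, hi, hu⟩
  · exact key he hu hv hn
  rcases hv with hv | ⟨t, ht, hte, j, hj, hv⟩
  · exact key he.symm hv (Or.inr ⟨s, hs, hse, i, hi, hu⟩) hn.symm
  have hij := ((tok (s := s) hu).trans hn).trans (tok (s := t) hv).symm
  have h1 := hij.pot_le
  have h2 := hij.symm.pot_le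
  rcases lt_trichotomy s t with hst | rfl | hst
  · have := h.seg_lt hst ht hi hj
    unfold F at this
    linarith
  · omega
  · have := h.seg_lt hst hs hj hi
    unfold F at this
    linarith

/-- `u` and `v` are joined by a walk inside `S`. -/
def Joined (G : SimpleGraph V) (S : Set V) (u v : V) : Prop :=
  ∃ p : G.Walk u v, ∀ x ∈ p.support, x ∈ S

lemma Joined.trans {S : Set V} (h : Joined G S u v) (h' : Joined G S v w) : Joined G S u w := by
  obtain ⟨p, hp⟩ := h
  obtain ⟨q, hq⟩ := h'
  refine ⟨p.append q, fun x hx => ?_⟩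
  rcases (SimpleGraph.Walk.mem_support_append_iff _ _).1 hx with hx | hx
  exacts [hp x hx, hq x hx]

lemma Joined.symm {S : Set V} (h : Joined G S u v) : Joined G S v u := by
  obtain ⟨p, hp⟩ := h
  exact ⟨p.reverse, fun x hx => hp x (by simpa using hx)⟩

lemma joined_P {S : Set V} (hij : i ≤ j) (hS : ∀ l, i ≤ l → l ≤ j → f.P l ∈ S) :
    Joined G S (f.P i) (f.P j) := by
  obtain ⟨p, hp⟩ := exists_segment f.P_adj hij
  refine ⟨p, fun x hx => ?_⟩
  obtain ⟨l, h1, h2, rfl⟩ := hp x hx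
  exact hS l h1 h2

lemma terr_congr {e' : ℕ} (he : e % 2 = e' % 2) : f.Terr r n e = f.Terr r n e' := by
  simp only [Terr, he]

/-- A run together with the link by which it begins. -/
lemma Opt.joined_run (h : f.Opt B r n) (ht : t ≤ n) :
    Joined G (f.Terr r n t) (f.P (r t).a) (r t).y := by
  obtain ⟨p, hp⟩ := (h.exit t ht).2
  refine Joined.trans (v := (r t).x) ⟨p, fun x hx => Or.inr ⟨t, by omega, rfl, (r t).a, ?_,
    Or.inr ⟨t, ht, rfl, _, (r t).z.start_mem_support, p, hp, hx⟩⟩⟩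
    ⟨(r t).z, fun x hx => Or.inl ⟨t, ht, rfl, hx⟩⟩
  exact ⟨Or.inl ⟨ht, le_rfl⟩, Or.inl ⟨ht, le_rfl⟩⟩

lemma seg_b (ht : t ≤ n) : f.Seg r n (t + 1) (r t).b := by
  refine ⟨Or.inr ⟨by omega, le_rfl⟩, ?_⟩
  rcases ht.eq_or_lt with rfl | ht
  · exact Or.inr (Or.inr rfl)
  · exact Or.inr (Or.inl ⟨by omega, ht, le_rfl⟩)

lemma Opt.joined_land (h : f.Opt B r n) (ht : t < n) :
    Joined G (f.Terr r n t) (r t).y (f.P (r (t + 1)).b) := by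
  obtain ⟨p, hp⟩ := (h.land t ht).2
  exact Joined.symm ⟨p, fun x hx => Or.inr ⟨t + 2, by omega, by omega, (r (t + 1)).b, seg_b ht,
    Or.inr ⟨t, ht.le, rfl, _, (r t).z.end_mem_support, p, hp, hx⟩⟩⟩

lemma joined_seg (ht : t < n) :
    Joined G (f.Terr r n (t + 1)) (f.P (r t).b) (f.P (r (t + 1)).a) := by
  have hmem : ∀ l, f.Seg r n (t + 1) l → f.P l ∈ f.Terr r n (t + 1) := fun l hl =>
    Or.inr ⟨t + 1, by omega, rfl, l, hl, Or.inl rfl⟩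
  rcases le_total (r t).b (r (t + 1)).a with hle | hle
  · exact joined_P hle fun l h1 h2 => hmem l
      ⟨Or.inr ⟨by omega, F_mono h1⟩, Or.inl ⟨ht, F_mono h2⟩⟩
  · exact (joined_P hle fun l h1 h2 => hmem l
      ⟨Or.inl ⟨ht, F_mono h1⟩, Or.inr (Or.inl ⟨by omega, ht, F_mono h2⟩)⟩).symm

/-- The network path is followed by two walks, one in the territory of each parity: run `t` is
continued by landing at the base index of run `t + 1` and proceeding along the segment `t + 2` to the
contact index of run `t + 2`. -/
lemma Opt.joined (h : f.Opt B r n) (ht : t ≤ n) :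
    (∃ c ≤ f.i₀, Joined G (f.Terr r n t) (f.P c) (f.P (r t).a)) ∧
    (∃ c ≤ f.i₀, Joined G (f.Terr r n (t + 1)) (f.P c) (f.P (r t).b)) := by
  induction t with
  | zero =>
    constructor
    · refine ⟨(r 0).a, ?_, joined_P le_rfl fun l h1 h2 => ?_⟩
      · rw [← h.start]
        exact (lt_of_F_lt (f := f) (by linarith [h.a_lt_b ht])).le
      · obtain rfl := le_antisymm h1 h2
        exact Or.inr ⟨0, by omega, rfl, _, ⟨Or.inl ⟨ht, le_rfl⟩, Or.inl ⟨ht, le_rfl⟩⟩, Or.inl rfl⟩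
    · refine ⟨(r 0).b, h.start.le, joined_P le_rfl fun l h1 h2 => ?_⟩
      obtain rfl := le_antisymm h1 h2
      exact Or.inr ⟨1, by omega, rfl, _, seg_b ht, Or.inl rfl⟩
  | succ t ih =>
    obtain ⟨⟨c, hc, h1⟩, ⟨d, hd, h2⟩⟩ := ih (by omega)
    refine ⟨⟨d, hd, h2.trans (joined_seg ht)⟩, ⟨c, hc, ?_⟩⟩
    rw [terr_congr (e' := t) (by omega)]
    exact (h1.trans (h.joined_run (by omega))).trans (h.joined_land ht)

end sep

/-- From the beginning of the base ray there are two walks to the level `B` that are at distance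
more than `1` from each other. -/
theorem exists_walks (f : Frame G) (B : ℝ) :
    ∃ (c d : ℕ) (u v : V) (p : G.Walk (f.P c) u) (q : G.Walk (f.P d) v),
      c ≤ f.i₀ ∧ d ≤ f.i₀ ∧ B ≤ f.pot u ∧ B ≤ f.pot v ∧
      ∀ x ∈ p.support, ∀ y ∈ q.support, ¬ f.Near 1 x y := by
  obtain ⟨r, n, h⟩ := f.exists_opt B
  obtain ⟨⟨c, hc, h1⟩, ⟨d, hd, h2⟩⟩ := h.joined le_rfl
  obtain ⟨p, hp⟩ := h1.trans (h.joined_run le_rfl)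
  obtain ⟨N, hN⟩ := (f.pot_tendsto.eventually (eventually_ge_atTop B)).exists_forall_of_atTop
  obtain ⟨q, hq⟩ := h2.trans (joined_P (f := f) (le_max_right N (r n).b) fun l h1 _ =>
    Or.inr ⟨n + 1, le_rfl, rfl, l, ⟨Or.inr ⟨by omega, F_mono h1⟩, Or.inr (Or.inr rfl)⟩, Or.inl rfl⟩)
  exact ⟨c, d, _, _, p, q, hc, hd, h.le_pot, hN _ (le_max_left _ _), fun x hx y hy =>
    h.terr_sep (by omega) (hp x hx) (hq y hy)⟩

end Frame

/-! ### Balls, limits of walks, and geodesic rays -/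

section prelim
variable {k : ℕ} {o u v w : V}

lemma dist_adj_le (h : G.Adj u v) : G.dist o v ≤ G.dist o u + 1 := by
  rcases h.diff_dist_adj (u := o) with h | h | h <;> omega

lemma dist_walk_le (p : G.Walk u v) : G.dist o v ≤ G.dist o u + p.length := by
  induction p with
  | nil => simp
  | cons h p ih =>
    rw [SimpleGraph.Walk.length_cons]
    have := dist_adj_le (o := o) h
    omega

/-- Balls are finite, with a bound for their size that does not depend on the centre. -/
lemma exists_ball (hdeg : ∀ v : V, (G.neighborSet v).Finite ∧ (G.neighborSet v).ncard ≤ k)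
    (u : V) (n : ℕ) :
    ∃ F : Finset V, F.card ≤ (k + 1) ^ n ∧ ∀ v (p : G.Walk u v), p.length ≤ n → v ∈ F := by
  classical
  induction n generalizing u with
  | zero =>
    refine ⟨{u}, by simp, fun v p hp => ?_⟩
    cases p with
    | nil => simp
    | cons h p => simp at hp
  | succ n ih =>
    choose F hF hF' using ih
    have hN : (hdeg u).1.toFinset.card ≤ k := by
      rw [← Set.ncard_eq_toFinset_card _ (hdeg u).1]
      exact (hdeg u).2
    refine ⟨insert u ((hdeg u).1.toFinset.biUnion F), ?_, fun v p hp => ?_⟩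
    · calc _ ≤ ((hdeg u).1.toFinset.biUnion F).card + 1 := Finset.card_insert_le _ _
        _ ≤ k * (k + 1) ^ n + (k + 1) ^ n :=
          add_le_add ((Finset.card_biUnion_le_card_mul _ _ _ fun w _ => hF w).trans
            (Nat.mul_le_mul_right _ hN)) (Nat.one_le_pow _ _ (by omega))
        _ = (k + 1) ^ (n + 1) := by ring
    · cases p with
      | nil => simp
      | @cons _ w _ h p =>
        rw [SimpleGraph.Walk.length_cons] at hp
        refine Finset.mem_insert_of_mem (Finset.mem_biUnion.2 ⟨w, ?_, hF' w v p (by omega)⟩)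
        simpa using h

/-- Walks that begin in a finite set subconverge pointwise. The limit is taken along a fixed
ultrafilter, so that limits of several sequences of walks can be compared. -/
lemma exists_limit (hdeg : ∀ v : V, (G.neighborSet v).Finite ∧ (G.neighborSet v).ncard ≤ k)
    {a b : ℕ → V} (A : Finset V) (ha : ∀ M, a M ∈ A) (p : ∀ M, G.Walk (a M) (b M)) :
    ∃ r : ℕ → V, ∀ t, ∀ᶠ M in (hyperfilter ℕ : Filter ℕ), (p M).getVert t = r t := by
  classical
  have key : ∀ t, ∃ v, ∀ᶠ M in (hyperfilter ℕ : Filter ℕ), (p M).getVert t = v := by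
    intro t
    choose F _ hF using fun u => exists_ball hdeg u t
    have h : ∀ᶠ M in (hyperfilter ℕ : Filter ℕ), ∃ v ∈ A.biUnion F, (p M).getVert t = v := by
      refine Eventually.of_forall fun M => ⟨_, Finset.mem_biUnion.2 ⟨_, ha M, ?_⟩, rfl⟩
      exact hF _ _ ((p M).take t) (by simp)
    obtain ⟨v, -, hv⟩ := (Ultrafilter.eventually_exists_mem_iff (A.biUnion F).finite_toSet).1 h
    exact ⟨v, hv⟩
  exact ⟨fun t => (key t).choose, fun t => (key t).choose_spec⟩

lemma eventually_ge_hyperfilter (n : ℕ) : ∀ᶠ M in (hyperfilter ℕ : Filter ℕ), n ≤ M := by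
  have h : (hyperfilter ℕ : Filter ℕ) ≤ atTop := by
    rw [← Nat.cofinite_eq_atTop]
    exact hyperfilter_le_cofinite
  exact h (eventually_ge_atTop n)

lemma limit_adj {a b : ℕ → V} {p : ∀ M, G.Walk (a M) (b M)} {r : ℕ → V}
    (hp : ∀ M, M ≤ (p M).length)
    (hr : ∀ t, ∀ᶠ M in (hyperfilter ℕ : Filter ℕ), (p M).getVert t = r t) (t : ℕ) :
    G.Adj (r t) (r (t + 1)) := by
  obtain ⟨M, h1, h2, h3⟩ := ((hr t).and ((hr (t + 1)).and
    (eventually_ge_hyperfilter (t + 1)))).exists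
  rw [← h1, ← h2]
  exact (p M).adj_getVert_succ (h3.trans (hp M))

lemma limit_injective {a b : ℕ → V} {p : ∀ M, G.Walk (a M) (b M)} {r : ℕ → V}
    (hp : ∀ M, M ≤ (p M).length) (hpath : ∀ M, (p M).IsPath)
    (hr : ∀ t, ∀ᶠ M in (hyperfilter ℕ : Filter ℕ), (p M).getVert t = r t) :
    Function.Injective r := by
  intro s t hst
  obtain ⟨M, h1, h2, h3⟩ := ((hr s).and ((hr t).and
    (eventually_ge_hyperfilter (s + t)))).exists
  have := hp M
  exact (hpath M).getVert_injOn (by simp; omega) (by simp; omega) (by rw [h1, h2, hst])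

lemma reachable_ray {r : ℕ → V} (hr : ∀ n, G.Adj (r n) (r (n + 1))) (n : ℕ) :
    G.Reachable (r 0) (r n) := by
  induction n with
  | zero => rfl
  | succ n ih => exact ih.trans (hr n).reachable

lemma ray_tendsto (hdeg : ∀ v : V, (G.neighborSet v).Finite ∧ (G.neighborSet v).ncard ≤ k)
    {r : ℕ → V} (hinj : Function.Injective r) (hadj : ∀ n, G.Adj (r n) (r (n + 1)))
    (hreach : G.Reachable o (r 0)) : Tendsto (fun n => G.dist o (r n)) atTop atTop := by
  refine tendsto_atTop.2 fun b => ?_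
  obtain ⟨F, -, hF⟩ := exists_ball hdeg o b
  have h := hinj.tendsto_cofinite.eventually F.finite_toSet.compl_mem_cofinite
  rw [Nat.cofinite_eq_atTop] at h
  filter_upwards [h] with n hn
  by_contra! hc
  obtain ⟨p, hp⟩ := (hreach.trans (reachable_ray hadj n)).exists_walk_length_eq_dist
  exact hn (hF _ p (by omega))

/-- A component with vertices at arbitrarily large distance from `o` contains a geodesic ray
starting at `o`. -/
lemma exists_geodesic (hdeg : ∀ v : V, (G.neighborSet v).Finite ∧ (G.neighborSet v).ncard ≤ k)
    (ho : ∀ M : ℕ, ∃ v, G.Reachable o v ∧ M ≤ G.dist o v) :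
    ∃ P : ℕ → V, P 0 = o ∧ (∀ i, G.Adj (P i) (P (i + 1))) ∧ ∀ i, G.dist o (P i) = i := by
  choose v hv hM using ho
  choose p hp using fun M => (hv M).exists_walk_length_eq_dist
  obtain ⟨r, hr⟩ := exists_limit hdeg {o} (fun _ => Finset.mem_singleton_self o) p
  have hlen : ∀ M, M ≤ (p M).length := fun M => (hM M).trans (hp M).ge
  refine ⟨r, ?_, limit_adj hlen hr, fun i => ?_⟩
  · obtain ⟨M, h⟩ := (hr 0).exists
    rw [← h, SimpleGraph.Walk.getVert_zero]
  · obtain ⟨M, h1, h2⟩ := ((hr i).and (eventually_ge_hyperfilter i)).exists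
    rw [← h1]
    have h3 := hlen M
    have h4 := dist_walk_le (o := o) ((p M).take i)
    have h5 := dist_walk_le (o := o) ((p M).drop i)
    rw [SimpleGraph.Walk.take_length, SimpleGraph.dist_self] at h4
    rw [SimpleGraph.Walk.drop_length, ← hp M] at h5
    omega

end prelim

/-! ### Slowly decaying weights -/

/-- There are unbounded monotone functions `m` growing as slowly as desired. -/
lemma exists_slow (F : ℕ → ℕ) : ∃ m : ℕ → ℕ, Monotone m ∧ (∀ r, m r ≤ r) ∧
    Tendsto m atTop atTop ∧ ∀ i ≥ F 0, F (m (2 * i)) ≤ i := by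
  refine ⟨fun r => Nat.findGreatest (fun s => 2 * F s ≤ r) r, fun r r' h => ?_,
    fun r => Nat.findGreatest_le r, ?_, fun i hi => ?_⟩
  · exact Nat.findGreatest_mono (fun s hs => hs.trans h) h
  · refine tendsto_atTop.2 fun s => ?_
    filter_upwards [eventually_ge_atTop (max s (2 * F s))] with r hr
    exact Nat.le_findGreatest ((le_max_left _ _).trans hr) ((le_max_right _ _).trans hr)
  · have := Nat.findGreatest_spec (P := fun s => 2 * F s ≤ 2 * i) (Nat.zero_le (2 * i))
      (by omega)
    dsimp only at this ⊢
    omega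

section weights
variable {φ : ℕ → ℝ} {o u v w : V}

/-- The weight of an edge, given by a function `φ` of the distance of its endpoints from `o`. -/
noncomputable def wtOf (G : SimpleGraph V) (o : V) (φ : ℕ → ℝ) (u v : V) : ℝ :=
  φ (G.dist o u) + φ (G.dist o v)

/-- The first `ℓ` edges of a walk that starts at distance at most `ρ - ℓ` from `o` have weight at
least `2 φ(ρ)` each, since they stay within distance `ρ` of `o`. -/
lemma le_cost_wtOf (hφ : Antitone φ) (hφ0 : ∀ n, 0 ≤ φ n) (p : G.Walk u v) {ℓ ρ : ℕ}
    (hℓ : ℓ ≤ p.length) (hρ : G.dist o u + ℓ ≤ ρ) :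
    2 * φ ρ * ℓ ≤ cost (wtOf G o φ) p := by
  induction p generalizing ℓ with
  | nil =>
    obtain rfl : ℓ = 0 := by simpa using hℓ
    simp
  | @cons u w v h p ih =>
    rw [cost_cons]
    rcases ℓ with _ | ℓ
    · have := cost_nonneg (c := wtOf G o φ) (fun _ _ => add_nonneg (hφ0 _) (hφ0 _)) p
      have := add_nonneg (hφ0 (G.dist o u)) (hφ0 (G.dist o w))
      rw [wtOf]
      push_cast
      linarith
    · rw [SimpleGraph.Walk.length_cons] at hℓ
      have h1 := dist_adj_le (o := o) h
      have h2 := ih (ℓ := ℓ) (by omega) (by omega)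
      have h3 : φ ρ ≤ φ (G.dist o u) := hφ (by omega)
      have h4 : φ ρ ≤ φ (G.dist o w) := hφ (by omega)
      rw [wtOf]
      push_cast
      linarith

/-- A walk that starts far away from `o` compared with its length has small weight. -/
lemma cost_wtOf_le (hφ : Antitone φ) (p : G.Walk u v) {ρ : ℕ}
    (hρ : ρ + p.length ≤ G.dist o u) : cost (wtOf G o φ) p ≤ 2 * φ ρ * p.length := by
  induction p with
  | nil => simp
  | @cons u w v h p ih =>
    rw [SimpleGraph.Walk.length_cons] at hρ
    rw [cost_cons, SimpleGraph.Walk.length_cons, wtOf]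
    have h1 := dist_adj_le (o := o) h.symm
    have h2 := ih (by omega)
    have h3 : φ (G.dist o u) ≤ φ ρ := hφ (by omega)
    have h4 : φ (G.dist o w) ≤ φ ρ := hφ (by omega)
    push_cast
    linarith

/-- The frame of weights `φ |u| + φ |v|` with potential `∑ i < |v|, φ i`, where `|v|` is the
distance from `o`, over a geodesic ray `P`. -/
noncomputable def frameOf (G : SimpleGraph V) (o : V) (φ : ℕ → ℝ) (hφ : Antitone φ) (hφ0 : ∀ n, 0 ≤ φ n)
    (hφ4 : ∀ n, φ n ≤ 1 / 4) (hφs : Tendsto (fun n => ∑ i ∈ Finset.range n, φ i) atTop atTop)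
    (P : ℕ → V) (hPadj : ∀ i, G.Adj (P i) (P (i + 1))) (hPd : ∀ i, G.dist o (P i) = i)
    (i₀ : ℕ) (hw : ∀ j ≥ i₀, ∃ W : ℕ → V, W 0 = P 0 ∧ (∀ t, G.Adj (W t) (W (t + 1))) ∧
      Tendsto (fun t => G.dist o (W t)) atTop atTop ∧
      ∀ t (p : G.Walk (P j) (W t)), 2100 < cost (wtOf G o φ) p) : Frame G where
  wt := wtOf G o φ
  wt_symm u v := add_comm _ _
  wt_nonneg u v := add_nonneg (hφ0 _) (hφ0 _)
  wt_le u v := by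
    have h1 := hφ4 (G.dist o u)
    have h2 := hφ4 (G.dist o v)
    rw [wtOf]
    linarith
  pot v := ∑ i ∈ Finset.range (G.dist o v), φ i
  pot_adj u v h := by
    have h1 : ∑ i ∈ Finset.range (G.dist o v), φ i ≤
        ∑ i ∈ Finset.range (G.dist o u + 1), φ i :=
      Finset.sum_le_sum_of_subset_of_nonneg (Finset.range_mono (dist_adj_le h))
        fun i _ _ => hφ0 i
    rw [Finset.sum_range_succ] at h1
    rw [wtOf]
    linarith [hφ0 (G.dist o v)]
  P := P
  P_adj := hPadj
  pot_mono := by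
    refine monotone_nat_of_le_succ fun i => ?_
    simp only [hPd, Finset.sum_range_succ]
    linarith [hφ0 i]
  pot_tendsto := by simpa only [hPd] using hφs
  wt_P i := by
    simp only [wtOf, hPd, Finset.sum_range_succ]
    linarith [hφ (Nat.le_succ i)]
  i₀ := i₀
  wander j hj := by
    obtain ⟨W, h1, h2, h3, h4⟩ := hw j hj
    exact ⟨W, h1, h2, hφs.comp h3, h4⟩

/-- Infinitely many disjoint rays and slowly decaying weights: no ball around a late vertex of `P`
separates `o` from infinity, because it has small radius in `G` and therefore misses one of the
rays. -/
lemma exists_weights {k : ℕ}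
    (hdeg : ∀ v : V, (G.neighborSet v).Finite ∧ (G.neighborSet v).ncard ≤ k)
    (R : ℕ → ℕ → V) (hrays : ∀ i, Function.Injective (R i) ∧ ∀ n, G.Adj (R i n) (R i (n + 1)))
    (hdisj : ∀ i j, i ≠ j → ∀ m n, R i m ≠ R j n) (hreach : ∀ i, G.Reachable o (R i 0))
    {P : ℕ → V} (hP0 : P 0 = o) (hPd : ∀ i, G.dist o (P i) = i) :
    ∃ φ : ℕ → ℝ, Antitone φ ∧ (∀ n, 0 ≤ φ n) ∧ (∀ n, φ n ≤ 1 / 4) ∧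
      Tendsto (fun n => ∑ i ∈ Finset.range n, φ i) atTop atTop ∧ Tendsto φ atTop (nhds 0) ∧
      ∃ i₀, ∀ j ≥ i₀, ∃ W : ℕ → V, W 0 = P 0 ∧ (∀ t, G.Adj (W t) (W (t + 1))) ∧
        Tendsto (fun t => G.dist o (W t)) atTop atTop ∧
        ∀ t (p : G.Walk (P j) (W t)), 2100 < cost (wtOf G o φ) p := by
  classical
  -- A ball of weight radius `2100` will have radius at most `ℓ s` in `G` where `φ = 1 / (s + 4)`.
  let ℓ : ℕ → ℕ := fun s => 2100 * (s + 4)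
  let D : ℕ → ℕ := fun s => (Finset.range ((k + 1) ^ ℓ s + 1)).sup fun j => G.dist o (R j 0)
  obtain ⟨m, hm, hmr, hmt, hmF⟩ := exists_slow fun s => ℓ s + D s + 1
  have hpos : ∀ n, (0 : ℝ) < m n + 4 := fun n => by positivity
  have hφ : Antitone fun n => 1 / ((m n : ℝ) + 4) := fun a b hab =>
    one_div_le_one_div_of_le (hpos a) (by simpa using hm hab)
  have hφ0 : ∀ n, 0 ≤ 1 / ((m n : ℝ) + 4) := fun n => (one_div_pos.2 (hpos n)).le
  refine ⟨fun n => 1 / ((m n : ℝ) + 4), hφ, hφ0, fun n => ?_, ?_, ?_, ℓ 0 + D 0 + 1,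
    fun i hi => ?_⟩
  · exact one_div_le_one_div_of_le (by norm_num) (by simp)
  · refine tendsto_atTop_mono (fun n => ?_)
      (Real.tendsto_sum_range_one_div_nat_succ_atTop.const_mul_atTop
        (by norm_num : (0 : ℝ) < 1 / 4))
    rw [Finset.mul_sum]
    refine Finset.sum_le_sum fun i _ => ?_
    rw [one_div_mul_one_div]
    have : (m i : ℝ) ≤ i := by exact_mod_cast hmr i
    exact one_div_le_one_div_of_le (hpos i) (by linarith)
  · refine tendsto_const_nhds.div_atTop ?_
    exact tendsto_atTop_add_const_right _ _ (tendsto_natCast_atTop_atTop.comp hmt)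
  · set s := m (2 * i) with hs
    have hF : ℓ s + D s + 1 ≤ i := hmF i hi
    obtain ⟨Q, hQ, hQ'⟩ := exists_ball hdeg (P i) (ℓ s)
    -- By the pigeonhole principle one of the first rays avoids the ball.
    obtain ⟨j, hj, hjQ⟩ : ∃ j ∈ Finset.range ((k + 1) ^ ℓ s + 1), ∀ n, R j n ∉ Q := by
      by_contra! hc
      choose! g hg using hc
      obtain ⟨a, -, b, -, hab, h⟩ := Finset.exists_ne_map_eq_of_card_lt_of_maps_to
        (s := Finset.range ((k + 1) ^ ℓ s + 1)) (t := Q) (f := fun j => R j (g j))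
        (by rw [Finset.card_range]; omega) hg
      exact hdisj a b hab _ _ h
    have hd : G.dist o (R j 0) ≤ D s :=
      Finset.le_sup (f := fun j => G.dist o (R j 0)) hj
    obtain ⟨q, hq⟩ := (hreach j).exists_walk_length_eq_dist
    have hshort : ∀ v (p : G.Walk (P i) v), cost (wtOf G o fun n => 1 / ((m n : ℝ) + 4)) p ≤ 2100 →
        p.length ≤ ℓ s := by
      intro v p hp
      by_contra! hc
      have h1 := le_cost_wtOf (o := o) hφ hφ0 p (ρ := 2 * i) hc.le (by rw [hPd]; omega)
      have h2 : 2 * (1 / ((m (2 * i) : ℝ) + 4)) * (ℓ s : ℝ) = 4200 := by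
        have := (hpos (2 * i)).ne'
        simp only [ℓ, hs]
        push_cast
        field_simp
        norm_num
      rw [h2] at h1
      linarith
    refine ⟨fun t => if t < q.length then q.getVert t else R j (t - q.length), ?_, fun t => ?_, ?_,
      fun t p => ?_⟩
    · by_cases h : 0 < q.length
      · simp [h, hP0]
      · have h0 : q.length = 0 := by omega
        have := SimpleGraph.Walk.eq_of_length_eq_zero h0
        simp [h0, hP0, this]
    · dsimp only
      by_cases h : t + 1 < q.length
      · rw [if_pos (by omega), if_pos h]
        exact q.adj_getVert_succ (by omega)
      · rw [if_neg h]
        by_cases h' : t < q.length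
        · have := q.adj_getVert_succ h'
          have h1 : t + 1 = q.length := by omega
          rw [if_pos h', h1, Nat.sub_self]
          rwa [h1, SimpleGraph.Walk.getVert_length] at this
        · rw [if_neg h', Nat.sub_add_comm (by omega)]
          exact (hrays j).2 _
    · refine Tendsto.congr' (f₁ := fun t => G.dist o (R j (t - q.length))) ?_ ?_
      · filter_upwards [eventually_ge_atTop q.length] with t ht
        rw [if_neg (by omega)]
      · exact (ray_tendsto hdeg (hrays j).1 (hrays j).2 (hreach j)).comp
          (tendsto_sub_atTop_nat _)
    · by_contra! hc
      have hend : ∀ v (p : G.Walk (P i) v), cost (wtOf G o fun n => 1 / ((m n : ℝ) + 4)) p ≤ 2100 →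
          i ≤ G.dist o v + ℓ s ∧ v ∈ Q := by
        intro v p hp
        have h1 := hshort v p hp
        have h2 := dist_walk_le (o := o) p.reverse
        rw [hPd, SimpleGraph.Walk.length_reverse] at h2
        exact ⟨by omega, hQ' _ p h1⟩
      obtain ⟨h1, h2⟩ := hend _ p hc
      dsimp only at h1 h2
      by_cases h : t < q.length
      · rw [if_pos h] at h1
        have h3 := dist_walk_le (o := o) (q.take t)
        rw [SimpleGraph.dist_self, SimpleGraph.Walk.take_length] at h3
        omega
      · rw [if_neg h] at h2
        exact hjQ _ h2

end weights

/-! ### Passing to the limit -/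

/-- Two separated walks to each level converge to two separated rays. -/
lemma exists_separated {k : ℕ}
    (hdeg : ∀ v : V, (G.neighborSet v).Finite ∧ (G.neighborSet v).ncard ≤ k) {o : V}
    (A : Finset V) (S : V → V → Prop)
    (h : ∀ M : ℕ, ∃ (a b u v : V) (p : G.Walk a u) (q : G.Walk b v), a ∈ A ∧ b ∈ A ∧
      M ≤ G.dist o u ∧ M ≤ G.dist o v ∧ ∀ x ∈ p.support, ∀ y ∈ q.support, S x y) :
    ∃ r₁ r₂ : ℕ → V,
      (Function.Injective r₁ ∧ (∀ n, G.Adj (r₁ n) (r₁ (n + 1))) ∧ r₁ 0 ∈ A) ∧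
      (Function.Injective r₂ ∧ (∀ n, G.Adj (r₂ n) (r₂ (n + 1))) ∧ r₂ 0 ∈ A) ∧
      ∀ s t, S (r₁ s) (r₂ t) := by
  classical
  -- Walks to distance `M + Δ` are long, where `Δ` bounds the distance of `A` from `o`.
  let Δ := A.sup fun a => G.dist o a
  choose a b u v p q ha hb hu hv hS using fun M => h (M + Δ)
  have hlen : ∀ {a u : V} {M : ℕ} (p : G.Walk a u), a ∈ A → M + Δ ≤ G.dist o u →
      M ≤ p.length := by
    intro a u M p ha hu
    have h1 := dist_walk_le (o := o) p
    have h2 : G.dist o a ≤ Δ := Finset.le_sup (f := fun a => G.dist o a) ha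
    omega
  have hp : ∀ M, M ≤ (p M).bypass.length := fun M => hlen _ (ha M) (hu M)
  have hq : ∀ M, M ≤ (q M).bypass.length := fun M => hlen _ (hb M) (hv M)
  obtain ⟨r₁, hr₁⟩ := exists_limit hdeg A ha fun M => (p M).bypass
  obtain ⟨r₂, hr₂⟩ := exists_limit hdeg A hb fun M => (q M).bypass
  refine ⟨r₁, r₂, ⟨limit_injective hp (fun M => (p M).bypass_isPath) hr₁, limit_adj hp hr₁, ?_⟩,
    ⟨limit_injective hq (fun M => (q M).bypass_isPath) hr₂, limit_adj hq hr₂, ?_⟩, fun s t => ?_⟩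
  · obtain ⟨M, h⟩ := (hr₁ 0).exists
    rw [← h, SimpleGraph.Walk.getVert_zero]
    exact ha M
  · obtain ⟨M, h⟩ := (hr₂ 0).exists
    rw [← h, SimpleGraph.Walk.getVert_zero]
    exact hb M
  · obtain ⟨M, h1, h2⟩ := ((hr₁ s).and (hr₂ t)).exists
    rw [← h1, ← h2]
    exact hS M _ ((p M).support_bypass_subset_support (SimpleGraph.Walk.getVert_mem_support _ _)) _
      ((q M).support_bypass_subset_support (SimpleGraph.Walk.getVert_mem_support _ _))

end DivRays

open DivRays

/-- If a graph `G` with bounded vertex degrees contains an infinite set of pairwise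
disjoint rays, then `G` has a pair of diverging rays: two rays `r₁, r₂` such that for
every `n` they have tails any two points of which are at graph distance greater than `n`
(every walk between them has length greater than `n`). -/
theorem exists_diverging_rays
    {V : Type} (G : SimpleGraph V) (k : ℕ)
    (hdeg : ∀ v : V, (G.neighborSet v).Finite ∧ (G.neighborSet v).ncard ≤ k)
    (R : ℕ → ℕ → V)
    (hrays : ∀ i, Function.Injective (R i) ∧ ∀ n, G.Adj (R i n) (R i (n + 1)))
    (hdisj : ∀ i j, i ≠ j → ∀ m n, R i m ≠ R j n) :
    ∃ r₁ r₂ : ℕ → V,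
      (Function.Injective r₁ ∧ ∀ n, G.Adj (r₁ n) (r₁ (n + 1))) ∧
      (Function.Injective r₂ ∧ ∀ n, G.Adj (r₂ n) (r₂ (n + 1))) ∧
      ∀ n : ℕ, ∃ N : ℕ, ∀ m₁ ≥ N, ∀ m₂ ≥ N,
        ∀ p : G.Walk (r₁ m₁) (r₂ m₂), n < p.length := by
  classical
  by_cases hreach : ∀ i, G.Reachable (R 0 0) (R i 0)
  swap
  · -- Rays in different components diverge trivially.
    push Not at hreach
    obtain ⟨i, hi⟩ := hreach
    refine ⟨R 0, R i, hrays 0, hrays i, fun n => ⟨0, fun m₁ _ m₂ _ p => (hi ?_).elim⟩⟩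
    exact ((reachable_ray (hrays 0).2 m₁).trans p.reachable).trans
      (reachable_ray (hrays i).2 m₂).symm
  set o := R 0 0 with ho
  have hfar : ∀ M : ℕ, ∃ v, G.Reachable o v ∧ M ≤ G.dist o v := by
    intro M
    obtain ⟨n, hn⟩ := ((ray_tendsto hdeg (hrays 0).1 (hrays 0).2 (hreach 0)).eventually
      (eventually_ge_atTop M)).exists
    exact ⟨R 0 n, reachable_ray (hrays 0).2 n, hn⟩
  obtain ⟨P, hP0, hPadj, hPd⟩ := exists_geodesic hdeg hfar
  obtain ⟨φ, hφ, hφ0, hφ4, hφs, hφt, i₀, hw⟩ :=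
    exists_weights hdeg R hrays hdisj hreach hP0 hPd
  let f := frameOf G o φ hφ hφ0 hφ4 hφs P hPadj hPd i₀ hw
  have hpot : ∀ v, f.pot v = ∑ i ∈ Finset.range (G.dist o v), φ i := fun v => rfl
  have hlevel : ∀ (M : ℕ) (v : V), (∑ i ∈ Finset.range M, φ i) + 1 ≤ f.pot v →
      M ≤ G.dist o v := by
    intro M v hv
    by_contra! hc
    have : f.pot v ≤ ∑ i ∈ Finset.range M, φ i :=
      Finset.sum_le_sum_of_subset_of_nonneg (Finset.range_mono hc.le) fun i _ _ => hφ0 i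
    linarith
  obtain ⟨r₁, r₂, ⟨hi₁, ha₁, hs₁⟩, ⟨hi₂, ha₂, -⟩, hsep⟩ := exists_separated hdeg (o := o)
    ((Finset.range (i₀ + 1)).image P) (fun x y => ¬ f.Near 1 x y) (by
      intro M
      obtain ⟨c, d, u, v, p, q, hc, hd, hu, hv, hpq⟩ :=
        f.exists_walks ((∑ i ∈ Finset.range M, φ i) + 1)
      exact ⟨_, _, u, v, p, q, Finset.mem_image_of_mem _ (Finset.mem_range_succ_iff.2 hc),
        Finset.mem_image_of_mem _ (Finset.mem_range_succ_iff.2 hd), hlevel M u hu,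
        hlevel M v hv, hpq⟩)
  refine ⟨r₁, r₂, ⟨hi₁, ha₁⟩, ⟨hi₂, ha₂⟩, fun n => ?_⟩
  -- Far away from `o`, a walk of length at most `n` has weight at most `1`.
  obtain ⟨ρ, hρ⟩ := (hφt.eventually (gt_mem_nhds
    (show (0 : ℝ) < 1 / (2 * (n + 1)) by positivity))).exists
  have hr₁ : G.Reachable o (r₁ 0) := by
    obtain ⟨c, -, hc⟩ := Finset.mem_image.1 hs₁
    rw [← hc, ← hP0]
    exact reachable_ray hPadj c
  obtain ⟨N, hN⟩ := ((ray_tendsto hdeg hi₁ ha₁ hr₁).eventually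
    (eventually_ge_atTop (ρ + n))).exists_forall_of_atTop
  refine ⟨N, fun m₁ hm₁ m₂ _ p => ?_⟩
  by_contra! hc
  refine hsep m₁ m₂ ⟨p, ?_⟩
  have h1 : cost (wtOf G o φ) p ≤ 2 * φ ρ * p.length :=
    cost_wtOf_le hφ p (by have := hN m₁ hm₁; omega)
  have h2 : (p.length : ℝ) ≤ n := by exact_mod_cast hc
  have h3 : φ ρ * (2 * (n + 1)) < 1 := (lt_div_iff₀ (by positivity)).1 hρ
  have h4 := mul_le_mul_of_nonneg_left h2 (hφ0 ρ)
  change cost (wtOf G o φ) p ≤ 1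
  nlinarith [hφ0 ρ]
end

section
/- Let G = (V,E) be a graph with bounded vertex degrees which contains an infinite set of pairwise disjoint rays. Then there is a finite vertex set A ⊂ V and an assignment of edge lengths ℓ : E → ℝ_{>0} such that: (1) no ball of radius 1 in the induced metric d_ℓ separates A from infinity (i.e., for every x, the complement of the d_ℓ-ball of radius 1 about x contains a ray starting in A); and (2) ℓ(e) → 0, meaning that for every ε > 0 all but finitely many edges e satisfy ℓ(e) < ε. -/
/-!
Fix a base vertex `o = R 0 0` and write `|v|` for the graph distance from `o` to `v`.

Bounded degree gives a bound `M`, independent of `x`, on the size of the graph ball `B(x, s)`.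
Hence one of the `M + 1` disjoint rays `R 0, …, R M` misses `B(x, s)`. If `x` is so far from `o`
that `B(x, s)` also misses geodesics from `o` to the starting vertices of these rays, then
a ray from `o` avoids `B(x, s)` (`exists_far_bound`). So for every `s` there is `N s` such
that `B(x, s)` does not separate `o` from infinity once `|x| ≥ N s`. For `s = 0` the ball is
`{x}`, which meets at most one of `R 0` and `R 1`; therefore `A = {R 0 0, R 1 0}` works for
all `x`.

Now let `ρ : ℕ → ℕ` tend to infinity so slowly that `|x| ≥ N (ρ |x|)` whenever `ρ |x| ≠ 0`, and
that `ρ` increases by at most one between `n` and `n + ρ n + 1` (`exists_slow`). Give the edge `uv`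
the length `3 / (1 + max (ρ |u|) (ρ |v|))`, which tends to `0`. With `s = ρ |x|`, every edge
meeting `B(x, s)` has length at least `3 / (s + 2)`, so leaving `B(x, s)` costs at least
`3 (s + 1) / (s + 2) ≥ 3 / 2 > 1`. Thus the unit ball about `x` lies in `B(x, s)`, which does not
separate `A` from infinity.
-/

/-- The path metric on a graph `G` induced by an assignment `w` of lengths to edges:
the infimum over all walks from `x` to `y` of the sum of the lengths of their edges. -/
noncomputable def weightedDist {V : Type*} (G : SimpleGraph V) (w : Sym2 V → ℝ)
    (x y : V) : ℝ :=
  sInf {r : ℝ | ∃ p : G.Walk x y, r = (p.edges.map w).sum}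

/-- `IsRayIn G S u`: some ray of `G` starts at `u` and has all its vertices in `S`. -/
def IsRayIn {V : Type} (G : SimpleGraph V) (S : Set V) (u : V) : Prop :=
  ∃ r : ℕ → V, Function.Injective r ∧ (∀ n, G.Adj (r n) (r (n + 1))) ∧ r 0 = u ∧ ∀ n, r n ∈ S

theorem IsRayIn.cons {V : Type} {G : SimpleGraph V} {S : Set V} {u v : V}
    (h : IsRayIn G S v) (huv : G.Adj u v) (hu : u ∈ S) : IsRayIn G S u := by
  obtain ⟨r, hinj, hadj, h0, hS⟩ := h
  -- If the ray already visits `u`, use its tail from `u`; otherwise prepend `u`.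
  by_cases hm : ∃ m, r m = u
  · obtain ⟨m, hm⟩ := hm
    exact ⟨fun n => r (m + n), fun a b hab => by simpa using hinj hab,
      fun n => hadj (m + n), hm, fun n => hS _⟩
  · push Not at hm
    refine ⟨fun n => Nat.casesOn n u r, ?_, ?_, rfl, ?_⟩
    · rintro (_ | a) (_ | b) hab
      · rfl
      · exact absurd hab.symm (hm b)
      · exact absurd hab (hm a)
      · exact congrArg _ (hinj hab)
    · rintro (_ | n)
      · simpa [h0] using huv
      · exact hadj n
    · rintro (_ | n)
      · exact hu
      · exact hS n

theorem IsRayIn.of_walk {V : Type} {G : SimpleGraph V} {S : Set V} {u v : V}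
    (p : G.Walk u v) (hp : ∀ x ∈ p.support, x ∈ S) (h : IsRayIn G S v) : IsRayIn G S u := by
  induction p with
  | nil => exact h
  | cons hadj p ih =>
    exact (ih (fun x hx => hp x (by simp [hx])) h).cons hadj (hp _ (by simp))

/-- In a graph of bounded degree, balls of a given radius have uniformly bounded size. -/
theorem exists_ball_bound {V : Type} (G : SimpleGraph V) (k : ℕ)
    (hdeg : ∀ v : V, (G.neighborSet v).Finite ∧ (G.neighborSet v).ncard ≤ k) (s : ℕ) :
    ∃ M : ℕ, ∀ x : V, ∃ F : Finset V, F.card ≤ M ∧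
      ∀ y, ∀ p : G.Walk x y, p.length ≤ s → y ∈ F := by
  classical
  induction s with
  | zero =>
    refine ⟨1, fun x => ⟨{x}, by simp, fun y p hp => ?_⟩⟩
    have := SimpleGraph.Walk.eq_of_length_eq_zero (p := p) (by omega)
    simp [this]
  | succ s ih =>
    obtain ⟨M, hM⟩ := ih
    choose F hF hFw using hM
    refine ⟨1 + k * M, fun x => ⟨{x} ∪ (hdeg x).1.toFinset.biUnion F, ?_, fun y p hp => ?_⟩⟩
    · refine (Finset.card_union_le _ _).trans ?_
      have h1 := Finset.card_biUnion_le_card_mul (hdeg x).1.toFinset F M (fun z _ => hF z)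
      have h2 : (hdeg x).1.toFinset.card ≤ k := by
        rw [← Set.ncard_eq_toFinset_card _ (hdeg x).1]; exact (hdeg x).2
      have h3 := Nat.mul_le_mul_right M h2
      simp only [Finset.card_singleton]
      omega
    · cases p with
      | nil => simp
      | cons hadj p =>
        refine Finset.mem_union_right _ (Finset.mem_biUnion.2 ⟨_, ?_, hFw _ _ p ?_⟩)
        · simpa using hadj
        · simpa using hp

/-- Balls of radius `s` with sufficiently remote centre do not separate `R 0 0` from infinity. -/
theorem exists_far_bound {V : Type} (G : SimpleGraph V) (hG : G.Connected) (k : ℕ)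
    (hdeg : ∀ v : V, (G.neighborSet v).Finite ∧ (G.neighborSet v).ncard ≤ k)
    (R : ℕ → ℕ → V)
    (hrays : ∀ i, Function.Injective (R i) ∧ ∀ n, G.Adj (R i n) (R i (n + 1)))
    (hdisj : ∀ i j, i ≠ j → ∀ m n, R i m ≠ R j n) (s : ℕ) :
    ∃ N : ℕ, ∀ x : V, N ≤ G.dist (R 0 0) x → IsRayIn G {y | s < G.dist x y} (R 0 0) := by
  classical
  obtain ⟨M, hM⟩ := exists_ball_bound G k hdeg s
  set o := R 0 0
  let D := (Finset.range (M + 1)).sup fun i => G.dist o (R i 0)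
  refine ⟨D + s + 1, fun x hx => ?_⟩
  obtain ⟨F, hF, hFw⟩ := hM x
  have hfar : ∀ y, y ∉ F → s < G.dist x y := by
    intro y hy
    by_contra! h
    obtain ⟨p, hp⟩ := hG.exists_walk_length_eq_dist x y
    exact hy (hFw y p (hp.trans_le h))
  -- Pigeonhole: more rays than vertices in the ball.
  have hi : ∃ i ∈ Finset.range (M + 1), ∀ m, R i m ∉ F := by
    by_contra! h
    choose! m hm using h
    have := Finset.card_le_card_of_injOn (s := Finset.range (M + 1)) (fun i => R i (m i)) hm (by
      intro a _ b _ hab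
      by_contra hne
      exact hdisj a b hne _ _ hab)
    simp only [Finset.card_range] at this
    omega
  obtain ⟨i, hiM, hi⟩ := hi
  obtain ⟨p, hp⟩ := hG.exists_walk_length_eq_dist o (R i 0)
  have hD : G.dist o (R i 0) ≤ D :=
    Finset.le_sup (f := fun i => G.dist o (R i 0)) hiM
  refine IsRayIn.of_walk p (fun y hy => ?_)
    ⟨R i, (hrays i).1, (hrays i).2, rfl, fun n => hfar _ (hi n)⟩
  have h1 : G.dist o y ≤ D :=
    ((SimpleGraph.dist_le (p.takeUntil y hy)).trans (p.length_takeUntil_le_length hy)).trans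
      (hp.trans_le hD)
  have h2 : G.dist o x ≤ G.dist o y + G.dist y x := hG.dist_triangle
  rw [SimpleGraph.dist_comm (u := y)] at h2
  show s < G.dist x y
  omega

/-- A function tending to infinity arbitrarily slowly: `N` prescribes when each value may be
attained, and consecutive jumps are spaced out. -/
theorem exists_slow (N : ℕ → ℕ) :
    ∃ ρ : ℕ → ℕ, Monotone ρ ∧ (∀ s, ∃ n, s ≤ ρ n) ∧ (∀ n, ρ (n + ρ n + 1) ≤ ρ n + 1) ∧
      ∀ n, ρ n = 0 ∨ N (ρ n) ≤ n := by
  -- `T s` is the first argument at which `ρ` takes a value at least `s`.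
  obtain ⟨T, hT0, hT⟩ : ∃ T : ℕ → ℕ, T 0 = 0 ∧ ∀ s, T (s + 1) = T s + s + 1 + N (s + 1) :=
    ⟨fun s => Nat.rec 0 (fun s t => t + s + 1 + N (s + 1)) s, rfl, fun _ => rfl⟩
  have hmono : Monotone T := monotone_nat_of_le_succ fun s => by rw [hT]; omega
  have hge : ∀ s, s ≤ T s := by
    intro s
    induction s with
    | zero => exact Nat.zero_le _
    | succ s ih => rw [hT]; omega
  let ρ : ℕ → ℕ := fun n : ℕ => Nat.findGreatest (fun s : ℕ => T s ≤ n) n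
  have hspec : ∀ n, T (ρ n) ≤ n := by
    intro n
    have h0 : T 0 ≤ n := hT0.trans_le (Nat.zero_le n)
    exact Nat.findGreatest_spec (P := fun s => T s ≤ n) (Nat.zero_le n) h0
  have hle : ∀ s n, T s ≤ n → s ≤ ρ n := fun s n h =>
    Nat.le_findGreatest ((hge s).trans h) h
  refine ⟨ρ, fun a b hab => hle _ _ ((hspec a).trans hab), fun s => ⟨T s, hle _ _ le_rfl⟩,
    fun n => ?_, fun n => ?_⟩
  · by_contra! h
    have h1 := hmono (show ρ n + 2 ≤ ρ (n + ρ n + 1) by omega)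
    have h2 := hspec (n + ρ n + 1)
    have h3 : T (ρ n + 2) = T (ρ n + 1) + (ρ n + 1) + 1 + N (ρ n + 2) := hT (ρ n + 1)
    have h4 := hle (ρ n + 1) n (by omega)
    omega
  · have h := hspec n
    cases hn : ρ n with
    | zero => exact Or.inl rfl
    | succ s => rw [hn, hT] at h; right; omega

/-- A function changing along each edge by at most its length changes along a walk by at most the
walk's length. -/
theorem le_walk_sum {V : Type} (G : SimpleGraph V) (w : Sym2 V → ℝ) (φ : V → ℝ)
    (h : ∀ u v, G.Adj u v → φ v - φ u ≤ w s(u, v)) {x y : V} (p : G.Walk x y) :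
    φ y - φ x ≤ (p.edges.map w).sum := by
  induction p with
  | nil => simp
  | cons hadj p ih =>
    have := h _ _ hadj
    simp only [SimpleGraph.Walk.edges_cons, List.map_cons, List.sum_cons]
    linarith

/-- The edge lengths `3 / (1 + max (σ u) (σ v))`. -/
noncomputable def edgeLen {V : Type} (σ : V → ℕ) : Sym2 V → ℝ :=
  Sym2.lift ⟨fun u v => 3 / (1 + ((max (σ u) (σ v) : ℕ) : ℝ)), fun u v => by simp only [max_comm]⟩

theorem edgeLen_mk {V : Type} (σ : V → ℕ) (u v : V) :
    edgeLen σ s(u, v) = 3 / (1 + ((max (σ u) (σ v) : ℕ) : ℝ)) := rfl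

/-- The unit ball about `x` for the lengths `edgeLen σ` lies in the graph ball of radius `σ x`,
provided `σ` is at most `σ x + 1` on the neighbourhood of that ball. -/
theorem one_lt_weightedDist {V : Type} (G : SimpleGraph V) (hG : G.Connected) (σ : V → ℕ)
    (x y : V) (hσ : ∀ v, G.dist x v ≤ σ x + 1 → σ v ≤ σ x + 1) (hy : σ x < G.dist x y) :
    1 < weightedDist G (edgeLen σ) x y := by
  set s := σ x
  -- The truncated and rescaled distance from `x` is `1`-Lipschitz for the edge lengths.
  let φ : V → ℝ := fun v => ((min (G.dist x v) (s + 1) : ℕ) : ℝ) * (3 / (s + 2))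
  have hφ : ∀ u v, G.Adj u v → φ v - φ u ≤ edgeLen σ s(u, v) := by
    intro u v huv
    have hd : G.dist x v ≤ G.dist x u + G.dist u v := hG.dist_triangle
    rw [SimpleGraph.dist_eq_one_iff_adj.2 huv] at hd
    have hc : (0 : ℝ) < 3 / (s + 2) := by positivity
    rw [edgeLen_mk]
    by_cases hu : s < G.dist x u
    · have h1 : ((min (G.dist x v) (s + 1) : ℕ) : ℝ) ≤ (min (G.dist x u) (s + 1) : ℕ) := by
        exact_mod_cast (by omega)
      have h2 : φ v ≤ φ u := mul_le_mul_of_nonneg_right h1 hc.le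
      have h3 : (0 : ℝ) ≤ 3 / (1 + ((max (σ u) (σ v) : ℕ) : ℝ)) := by positivity
      linarith
    · have h1 : ((min (G.dist x v) (s + 1) : ℕ) : ℝ) ≤ (min (G.dist x u) (s + 1) : ℕ) + 1 := by
        exact_mod_cast (by omega)
      have h2 : φ v ≤ φ u + 3 / (s + 2) := by
        have := mul_le_mul_of_nonneg_right h1 hc.le
        rw [add_mul, one_mul] at this
        exact this
      have h3 : max (σ u) (σ v) ≤ s + 1 := max_le (hσ u (by omega)) (hσ v (by omega))
      have h3' : ((max (σ u) (σ v) : ℕ) : ℝ) ≤ s + 1 := by exact_mod_cast h3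
      have h4 : (3 : ℝ) / (s + 2) ≤ 3 / (1 + ((max (σ u) (σ v) : ℕ) : ℝ)) :=
        div_le_div_of_nonneg_left (by norm_num) (by positivity) (by linarith)
      linarith
  have hφx : φ x = 0 := by
    have : min (G.dist x x) (s + 1) = 0 := by simp
    simp only [φ, this, Nat.cast_zero, zero_mul]
  have hφy : (3 : ℝ) / 2 ≤ φ y := by
    have : min (G.dist x y) (s + 1) = s + 1 := by omega
    simp only [φ, this]
    have hs : (0 : ℝ) ≤ s := Nat.cast_nonneg s
    push_cast
    rw [← mul_div_assoc, div_le_div_iff₀ (by norm_num) (by positivity)]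
    linarith
  have hinf : (3 : ℝ) / 2 ≤ weightedDist G (edgeLen σ) x y := by
    obtain ⟨p⟩ := hG.preconnected x y
    refine le_csInf ⟨_, p, rfl⟩ ?_
    rintro r ⟨q, rfl⟩
    have := le_walk_sum G (edgeLen σ) φ hφ q
    linarith
  linarith

/-- Let `G` be a (connected) graph with bounded vertex degrees containing an infinite set
of pairwise disjoint rays. Then there are a finite vertex set `A` and positive edge
lengths `w` such that (1) no ball of radius `1` in the induced path metric separates `A`
from infinity (for every `x`, there is a ray starting in `A` all of whose vertices are at
`w`-distance greater than `1` from `x`), and (2) `w(e) → 0`: for every `ε > 0` all but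
finitely many edges `e` satisfy `w(e) < ε`. -/
theorem exists_shrinking_edge_lengths
    {V : Type} (G : SimpleGraph V) (hG : G.Connected) (k : ℕ)
    (hdeg : ∀ v : V, (G.neighborSet v).Finite ∧ (G.neighborSet v).ncard ≤ k)
    (R : ℕ → ℕ → V)
    (hrays : ∀ i, Function.Injective (R i) ∧ ∀ n, G.Adj (R i n) (R i (n + 1)))
    (hdisj : ∀ i j, i ≠ j → ∀ m n, R i m ≠ R j n) :
    ∃ A : Set V, A.Finite ∧ ∃ w : Sym2 V → ℝ,
      (∀ e ∈ G.edgeSet, 0 < w e) ∧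
      (∀ x : V, ∃ r : ℕ → V, Function.Injective r ∧ (∀ n, G.Adj (r n) (r (n + 1))) ∧
        r 0 ∈ A ∧ ∀ n, 1 < weightedDist G w x (r n)) ∧
      (∀ ε : ℝ, 0 < ε → {e : Sym2 V | e ∈ G.edgeSet ∧ ε ≤ w e}.Finite) := by
  classical
  choose N hN using exists_far_bound G hG k hdeg R hrays hdisj
  obtain ⟨ρ, hmono, hunb, hslow, hρN⟩ := exists_slow N
  set o := R 0 0
  let σ : V → ℕ := fun v => ρ (G.dist o v)
  refine ⟨{R 0 0, R 1 0}, by simp, edgeLen σ, ?_, ?_, ?_⟩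
  · intro e _
    induction e using Sym2.ind with
    | _ u v => rw [edgeLen_mk]; positivity
  · intro x
    have hlen : ∀ y, σ x < G.dist x y → 1 < weightedDist G (edgeLen σ) x y := by
      refine fun y hy => one_lt_weightedDist G hG σ x y (fun v hv => ?_) hy
      have hd : G.dist o v ≤ G.dist o x + G.dist x v := hG.dist_triangle
      exact (hmono (by simp only [σ] at hv; omega)).trans (hslow (G.dist o x))
    rcases hρN (G.dist o x) with h0 | hfar
    · -- Here the unit ball is `{x}`, and one of `R 0`, `R 1` does not pass through `x`.
      have hone : ∃ i, (i = 0 ∨ i = 1) ∧ ∀ n, x ≠ R i n := by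
        by_cases h : ∃ n, x = R 0 n
        · obtain ⟨n, rfl⟩ := h
          exact ⟨1, Or.inr rfl, fun m => hdisj 0 1 (by norm_num) n m⟩
        · push Not at h
          exact ⟨0, Or.inl rfl, h⟩
      obtain ⟨i, hi, hx⟩ := hone
      refine ⟨R i, (hrays i).1, (hrays i).2, by rcases hi with rfl | rfl <;> simp,
        fun n => hlen _ ?_⟩
      have : σ x = 0 := h0
      rw [this]
      exact hG.pos_dist_of_ne (hx n)
    · obtain ⟨r, hinj, hadj, hr0, hr⟩ := hN _ x hfar
      exact ⟨r, hinj, hadj, Or.inl hr0, fun n => hlen _ (hr n)⟩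
  · intro ε hε
    obtain ⟨m, hm⟩ := exists_nat_gt (3 / ε)
    obtain ⟨n, hn⟩ := hunb m
    obtain ⟨M, hM⟩ := exists_ball_bound G k hdeg n
    obtain ⟨F, -, hF⟩ := hM o
    -- A long edge has both endpoints at distance less than `n` from `o`.
    have hfin : ∀ v, σ v < m → v ∈ F := by
      intro v hv
      obtain ⟨p, hp⟩ := hG.exists_walk_length_eq_dist o v
      refine hF v p ?_
      by_contra! h
      have h1 := hmono (show n ≤ G.dist o v by omega)
      simp only [σ] at hv
      omega
    refine Set.Finite.subset (F.sym2.finite_toSet) ?_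
    rintro e ⟨-, he⟩
    induction e using Sym2.ind with
    | _ u v =>
      rw [edgeLen_mk, le_div_iff₀ (by positivity)] at he
      rw [div_lt_iff₀ hε] at hm
      have h1 : ((max (σ u) (σ v) : ℕ) : ℝ) < m := by nlinarith
      have h2 : max (σ u) (σ v) < m := by exact_mod_cast h1
      simp only [Finset.mem_coe, Finset.mk_mem_sym2_iff]
      exact ⟨hfin u ((le_max_left _ _).trans_lt h2), hfin v ((le_max_right _ _).trans_lt h2)⟩
end
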